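/- arXiv:1812.01451 — 2 statements merged into one kernel-verified Lean document; each statement's English description precedes it below -/
import Mathlib

section
/- For every integer l ≥ 0, every m ∈ {−l,…,l} and every μ ∈ {−1,0,1}, the pointwise product formula Y_l^m(n) Y_1^μ(n) = √(3/(4π)) ( η_{l+1,m}^{μ} Y_{l+1}^{m+μ}(n) + (−1)^μ η_{−l,m}^{μ} Y_{l−1}^{m+μ}(n) ) holds for all n on the unit sphere S², with the convention that Y_{l'}^{m'} = 0 whenever |m'| > l' or l' < 0. -/
open MeasureTheory Real
open scoped BigOperators Classical

noncomputable section

/-- Velocity space ℝ³. -/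
abbrev V3 := Fin 3 → ℝ

/-- Euclidean norm |v| on ℝ³. -/
def nrm (v : V3) : ℝ := Real.sqrt (∑ i, v i ^ 2)

/-- The (normalized) Maxwellian M(v) = (2π)^{-3/2} exp(-|v|²/2). -/
def Mxw (v : V3) : ℝ := (2 * π) ^ (-(3 : ℝ) / 2) * Real.exp (-(∑ i, v i ^ 2) / 2)

/-- |α| = α₁ + α₂ + α₃ for a multi-index. -/
def degIdx (α : Fin 3 → ℕ) : ℕ := α 0 + α 1 + α 2

/-- α! = α₁! α₂! α₃! for a multi-index. -/
def multiFact (α : Fin 3 → ℕ) : ℕ := (α 0).factorial * (α 1).factorial * (α 2).factorial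

/-- Multidimensional Hermite polynomial
`H^α(v) = ((-1)^{|α|}/M(v)) ∂^{|α|} M(v) / ∂v₁^{α₁} ∂v₂^{α₂} ∂v₃^{α₃}`. -/
def Herm (α : Fin 3 → ℕ) (v : V3) : ℝ :=
  ((-1 : ℝ) ^ degIdx α / Mxw v) *
    iteratedDeriv (α 0) (fun x1 =>
      iteratedDeriv (α 1) (fun x2 =>
        iteratedDeriv (α 2) (fun x3 => Mxw ![x1, x2, x3]) (v 2)) (v 1)) (v 0)

/-- Partial derivative ∂f/∂vᵢ. -/
def pd (i : Fin 3) (f : V3 → ℝ) (v : V3) : ℝ := fderiv ℝ f v (Pi.single i 1)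

/-- Divergence of a vector field on ℝ³. -/
def div3 (F : V3 → V3) (v : V3) : ℝ := ∑ i, pd i (fun w => F w i) v

/-- Collision kernel matrix A(v) = Λ|v|^{γ+2} Π(v), Π_{ij}(v) = δ_{ij} - vᵢvⱼ/|v|². -/
def Aker (Λ γ : ℝ) (v : V3) (i j : Fin 3) : ℝ :=
  Λ * nrm v ^ (γ + 2) * ((if i = j then (1 : ℝ) else 0) - v i * v j / nrm v ^ 2)

/-- Fokker-Planck-Landau collision operator
`Q[f](v) = ∇_v · ∫ A(v-v*) (f(v*)∇_v f(v) - f(v)∇_{v*} f(v*)) dv*`. -/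
def Qcol (Λ γ : ℝ) (f : V3 → ℝ) (v : V3) : ℝ :=
  div3 (fun w i =>
    ∫ w₁ : V3, ∑ j, Aker Λ γ (w - w₁) i j * (f w₁ * pd j f w - f w * pd j f w₁)) v

/-- G_{st}(γ,p,q) = ∫ |g|^γ g_s g_t H^p(g) H^q(g) M(g) dg. -/
def Gst (γ : ℝ) (s t : Fin 3) (p q : Fin 3 → ℕ) : ℝ :=
  ∫ g : V3, nrm g ^ γ * g s * g t * Herm p g * Herm q g * Mxw g

/-- Generalized binomial coefficient C(x,k) = x(x-1)⋯(x-k+1)/k!. -/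
def genBinom (x : ℝ) (k : ℕ) : ℝ := (∏ j ∈ Finset.range k, (x - j)) / k.factorial

/-- Scalar coefficient a_{pq}^{λκ}, zero unless p+q = λ+κ. -/
def aCoe (p q lam kap : ℕ) : ℝ :=
  if p + q = lam + kap then
    (2 : ℝ) ^ (-(((p : ℝ) + q) / 2)) * lam.factorial * kap.factorial *
      ∑ s ∈ Finset.Icc (p - kap) (min p lam),
        (-1 : ℝ) ^ ((q : ℤ) - lam + s) /
          ((s.factorial * (lam - s).factorial * (p - s).factorial *
            ((q : ℤ) - lam + s).toNat.factorial : ℕ) : ℝ)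
  else 0

/-- Multi-index coefficient a_{p,q}^{λ,κ} = ∏ᵢ a_{pᵢqᵢ}^{λᵢκᵢ}. -/
def aMulti (p q lam kap : Fin 3 → ℕ) : ℝ := ∏ i, aCoe (p i) (q i) (lam i) (kap i)

/-- B_p^q(γ,s,t) = -G_{st}(γ,p,q) + δ_{st} Σ_r G_{rr}(γ,p,q). -/
def Bcoe (γ : ℝ) (s t : Fin 3) (p q : Fin 3 → ℕ) : ℝ :=
  -Gst γ s t p q + (if s = t then (1 : ℝ) else 0) * ∑ r, Gst γ r r p q

/-- The expansion coefficient A_α^{λ,κ} of the FPL collision operator. -/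
def coeA (Λ γ : ℝ) (α lam kap : Fin 3 → ℕ) : ℝ :=
  (1 / (multiFact α : ℝ)) *
    ∫ v : V3, Herm α v *
      div3 (fun w i =>
        ∫ w₁ : V3, ∑ j, Aker Λ γ (w - w₁) i j *
          (Herm lam w₁ * Mxw w₁ * pd j (fun u => Herm kap u * Mxw u) w -
            Herm lam w * Mxw w * pd j (fun u => Herm kap u * Mxw u) w₁)) v

/-- Multi-indices p with |p| < n, i.e. 0 ≤ |p| ≤ n-1. -/
def idxLt (n : ℕ) : Finset (Fin 3 → ℕ) :=
  (Fintype.piFinset (fun _ : Fin 3 => Finset.range n)).filter (fun p => degIdx p < n)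

/-- Pairs of multi-indices (p,q) with p + q = σ. -/
def idxPairs (σ : Fin 3 → ℕ) : Finset ((Fin 3 → ℕ) × (Fin 3 → ℕ)) :=
  ((Fintype.piFinset fun i => Finset.range (σ i + 1)) ×ˢ
      (Fintype.piFinset fun i => Finset.range (σ i + 1))).filter fun x => x.1 + x.2 = σ

/-- Multi-index permutation operator exchanging the i-th and j-th entries. -/
def swapIdx (i j : Fin 3) (p : Fin 3 → ℕ) : Fin 3 → ℕ := p ∘ Equiv.swap i j

/-- Associated Legendre function
`P_l^m(x) = ((-1)^m/(2^l l!)) (1-x²)^{m/2} d^{l+m}/dx^{l+m} (x²-1)^l`. -/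
def assocLegendre (l : ℕ) (m : ℤ) (x : ℝ) : ℝ :=
  ((-1 : ℝ) ^ m * (1 - x ^ 2) ^ ((m : ℝ) / 2) / (2 ^ l * l.factorial)) *
    iteratedDeriv ((l : ℤ) + m).toNat (fun y => (y ^ 2 - 1) ^ l) x

/-- Spherical harmonic Y_l^m(n), written in terms of cos θ = n₃ and φ = arg(n₁ + i n₂). -/
def sphHarm (l : ℕ) (m : ℤ) (n : V3) : ℂ :=
  ((Real.sqrt ((2 * l + 1) / (4 * π) * ((l : ℤ) - m).toNat.factorial /
      ((l : ℤ) + m).toNat.factorial) * assocLegendre l m (n 2) : ℝ) : ℂ) *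
    Complex.exp (Complex.I * m * (Complex.arg ((n 0 : ℂ) + n 1 * Complex.I) : ℝ))

/-- Spherical harmonic with the convention Y_{l'}^{m'} = 0 when |m'| > l' or l' < 0. -/
def sphHarmZ (l m : ℤ) (n : V3) : ℂ :=
  if 0 ≤ l ∧ m.natAbs ≤ l.toNat then sphHarm l.toNat m n else 0

/-- Surface integral over the unit sphere S² in spherical coordinates. -/
def sphereIntegral (F : V3 → ℂ) : ℂ :=
  ∫ θ in (0 : ℝ)..π, ∫ φ in (0 : ℝ)..(2 * π),
    F ![Real.sin θ * Real.cos φ, Real.sin θ * Real.sin φ, Real.cos θ] * (Real.sin θ : ℂ)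

/-- Laguerre polynomial L_n^{(β)}(x) = (x^{-β} eˣ / n!) dⁿ/dxⁿ [x^{n+β} e^{-x}]. -/
def laguerre (n : ℕ) (β : ℝ) (x : ℝ) : ℝ :=
  (x ^ (-β) * Real.exp x / n.factorial) *
    iteratedDeriv n (fun y => y ^ ((n : ℝ) + β) * Real.exp (-y)) x

/-- Normalized Burnett polynomial B_{α̂}(v) with α̂ = (l, m, nn). -/
def Burnett (l : ℕ) (m : ℤ) (nn : ℕ) (v : V3) : ℂ :=
  ((Real.sqrt ((2 : ℝ) ^ (1 - (l : ℝ)) * π ^ ((3 : ℝ) / 2) * nn.factorial /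
        Real.Gamma (nn + l + 3 / 2)) *
      laguerre nn ((l : ℝ) + 1 / 2) (nrm v ^ 2 / 2) * nrm v ^ l : ℝ) : ℂ) *
    sphHarm l m (fun i => v i / nrm v)

/-- Connection coefficient C_{α̂}^α = ∫ B_{α̂}(v) H^α(v) M(v) dv. -/
def coeC (l : ℕ) (m : ℤ) (nn : ℕ) (α : Fin 3 → ℕ) : ℂ :=
  ∫ v : V3, Burnett l m nn v * ((Herm α v * Mxw v : ℝ) : ℂ)

/-- Burnett indices α̂ = (α̂₁,α̂₂,α̂₃), α̂₂ ∈ {-α̂₁,…,α̂₁}, with |α̂|_B = α̂₁ + 2α̂₃ = N. -/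
def burnettIdx (N : ℕ) : Finset (ℕ × ℤ × ℕ) :=
  ((Finset.range (N + 1)) ×ˢ (Finset.Icc (-(N : ℤ)) N) ×ˢ (Finset.range (N + 1))).filter
    fun x => x.1 + 2 * x.2.2 = N ∧ x.2.1.natAbs ≤ x.1

/-- D_{n₁n₂}^{l₁l₂} = √(n₁!n₂!/(Γ(n₁+l₁+3/2)Γ(n₂+l₂+3/2))). -/
def Dcoe (n1 n2 l1 l2 : ℕ) : ℝ :=
  Real.sqrt ((n1.factorial * n2.factorial : ℝ) /
    (Real.Gamma (n1 + l1 + 3 / 2) * Real.Gamma (n2 + l2 + 3 / 2)))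

/-- K(μ,α,κ,m,n) = (-1)^{m+n} Γ(μ+1) Σᵢ C(μ-α,m-i) C(μ-κ,n-i) C(i+μ,i). -/
def Kcoe (μ a k : ℝ) (m n : ℕ) : ℝ :=
  (-1 : ℝ) ^ (m + n) * Real.Gamma (μ + 1) *
    ∑ i ∈ Finset.range (min m n + 1),
      genBinom (μ - a) (m - i) * genBinom (μ - k) (n - i) * genBinom ((i : ℝ) + μ) i

/-- F_{st}(l₁,m₁,l₂,m₂) = ∫_{S²} n_s n_t Y_{l₁}^{m₁}(n) Y_{l₂}^{m₂}(n) dn. -/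
def Fst (s t : Fin 3) (l1 : ℕ) (m1 : ℤ) (l2 : ℕ) (m2 : ℤ) : ℂ :=
  sphereIntegral fun n => ((n s * n t : ℝ) : ℂ) * sphHarm l1 m1 n * sphHarm l2 m2 n

/-- Kronecker delta on ℤ. -/
def kdZ (a b : ℤ) : ℝ := if a = b then 1 else 0

/-- η_{lm}^μ as in the paper (l, m, μ integers, μ ∈ {-1,0,1}). -/
def eta (l m μ : ℤ) : ℝ :=
  Real.sqrt ((((l : ℝ) + (2 * kdZ 1 μ - 1) * m + kdZ 1 μ) *
      ((l : ℝ) - (2 * kdZ (-1) μ - 1) * m + kdZ (-1) μ)) /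
    ((2 : ℝ) ^ μ.natAbs * (2 * l - 1) * (2 * l + 1)))

/-- General Maxwellian M_{ρ,u,θ}. -/
def Mgen (ρ θ : ℝ) (u : V3) (v : V3) : ℝ :=
  ρ / (2 * π * θ) ^ ((3 : ℝ) / 2) * Real.exp (-(nrm (v - u) ^ 2) / (2 * θ))

/-- Hermite coefficient f_α = (1/α!) ∫ H^α(v) f(v) dv. -/
def hermCoeff (f : V3 → ℝ) (α : Fin 3 → ℕ) : ℝ :=
  (1 / (multiFact α : ℝ)) * ∫ v : V3, Herm α v * f v

/-- τ(t) = 1 - 0.4 e^{-4t}. -/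
def tau (t : ℝ) : ℝ := 1 - 0.4 * Real.exp (-4 * t)

/-- The BKW distribution. -/
def fBKW (t : ℝ) (v : V3) : ℝ :=
  (2 * π * tau t) ^ (-(3 : ℝ) / 2) * Real.exp (-(nrm v ^ 2) / (2 * tau t)) *
    (1 + (1 - tau t) / tau t * (nrm v ^ 2 / (2 * tau t) - 3 / 2))

/-!
Put `w_l = (X² - 1)^l / (2^l l!)`. From `(X² - 1) w_l = 2(l + 1) w_{l+1}` and
`w_{l+1}' = X w_l`, Leibniz' rule expresses `X`, `1` and `X² - 1` times `(2l + 1) w_l^{(k)}` through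
derivatives of `w_{l+1}` and `w_{l-1}`. Multiplied by powers of `s = -√(1 - x²)`, these are the
contiguity relations for `x P_l^m` and for `s P_l^m` (raising and lowering `m`). Up to a constant,
`P_1^μ` is `x`, `s` or `-s`, so that all three relations read
`(2l + 1) (1 - μ)! P_1^μ P_l^m = (l+1-m-μ)!/(l-m)! P_{l+1}^{m+μ}
  + (-1)^μ (l+m)!/(l-1+m+μ)! P_{l-1}^{m+μ}`,
and the normalization constants turn these factorial ratios into the coefficients `η`.
-/

section Rodrigues

open Polynomial
open scoped Nat

variable (K : Type*) [Field K]

/-- The polynomial `(X² - 1)^l / (2^l l!)`, whose iterated derivatives enter Rodrigues' formula for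
the associated Legendre functions. The index is an integer, with value `0` for `l < 0`, so that the
recurrences lowering `l` need no case distinction at `l = 0`. -/
def rodrigues (l : ℤ) : K[X] :=
  if l < 0 then 0 else C (2 ^ l.toNat * (l.toNat ! : K))⁻¹ * (X ^ 2 - 1) ^ l.toNat

theorem rodrigues_of_neg {l : ℤ} (hl : l < 0) : rodrigues K l = 0 := if_pos hl

theorem rodrigues_natCast (l : ℕ) :
    rodrigues K l = C (2 ^ l * (l ! : K))⁻¹ * (X ^ 2 - 1) ^ l := by
  simp [rodrigues]

theorem iterate_derivative_rodrigues_eq_zero {l : ℤ} {k : ℕ} (hk : 2 * l < k) :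
    derivative^[k] (rodrigues K l) = 0 := by
  obtain hl | hl := lt_or_ge l 0
  · rw [rodrigues_of_neg K hl, iterate_derivative_zero]
  lift l to ℕ using hl
  refine iterate_derivative_eq_zero ?_
  calc (rodrigues K l).natDegree ≤ l * 2 := by
        rw [rodrigues_natCast]
        refine (natDegree_C_mul_le _ _).trans (natDegree_pow_le_of_le l ?_)
        compute_degree
    _ < k := by omega

variable {K}

theorem eval_iterate_derivative_rodrigues_eq_zero {l : ℤ} {k : ℕ} (hk : k < l) {x : K}
    (hx : x ^ 2 = 1) : (derivative^[k] (rodrigues K l)).eval x = 0 := by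
  lift l to ℕ using by omega
  have hkl : l - k ≠ 0 := by omega
  obtain ⟨q, hq⟩ := pow_sub_dvd_iterate_derivative_pow (X ^ 2 - 1 : K[X]) l k
  rw [rodrigues_natCast, iterate_derivative_C_mul, hq]
  simp [hx, hkl]

variable [CharZero K]

theorem X_sq_sub_one_mul_rodrigues (l : ℤ) :
    (X ^ 2 - 1) * rodrigues K l = ((2 * (l + 1) : ℤ) : K[X]) * rodrigues K (l + 1) := by
  obtain hl | rfl | hl : l < -1 ∨ l = -1 ∨ 0 ≤ l := by omega
  · simp [rodrigues_of_neg K (show l < 0 by omega), rodrigues_of_neg K (show l + 1 < 0 by omega)]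
  · simp [rodrigues_of_neg]
  lift l to ℕ using hl
  have hcoeff : (2 ^ l * (l ! : K))⁻¹ =
      ((2 * (l + 1) : ℤ) : K) * (2 ^ (l + 1) * ((l + 1)! : K))⁻¹ := by
    have : (l : K) + 1 ≠ 0 := by exact_mod_cast l.succ_ne_zero
    have : (l ! : K) ≠ 0 := by exact_mod_cast l.factorial_ne_zero
    rw [Nat.factorial_succ]
    push_cast
    field_simp
    ring
  have hsucc := rodrigues_natCast K (l + 1)
  rw [Nat.cast_succ] at hsucc
  rw [hsucc, rodrigues_natCast, hcoeff, C_mul, C_eq_intCast]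
  ring

theorem derivative_rodrigues_succ (l : ℤ) :
    derivative (rodrigues K (l + 1)) = rodrigues K l * X := by
  obtain hl | hl := lt_or_ge l (-1)
  · simp [rodrigues_of_neg K (show l < 0 by omega), rodrigues_of_neg K (show l + 1 < 0 by omega)]
  induction l, hl using Int.leInduction with
  | base => simp [rodrigues]
  | succ l _ ih =>
    have hne : ((2 * (l + 1 + 1) : ℤ) : K[X]) ≠ 0 := Int.cast_ne_zero.mpr (by omega)
    have hX : derivative (X ^ 2 - 1 : K[X]) = 2 * X := by
      rw [derivative_sub, derivative_X_sq, derivative_one, sub_zero, map_ofNat]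
    have hpred := X_sq_sub_one_mul_rodrigues (K := K) l
    have hderiv := congrArg derivative (X_sq_sub_one_mul_rodrigues (K := K) (l + 1))
    rw [derivative_mul, derivative_intCast_mul, hX, ih] at hderiv
    refine mul_left_cancel₀ hne ?_
    push_cast at hderiv hpred ⊢
    linear_combination X * hpred - hderiv

theorem iterate_derivative_succ_rodrigues_mul_X (l : ℤ) (k : ℕ) :
    derivative^[k + 1] (rodrigues K l) * X =
      (2 * (l : K[X]) - (k : K[X])) * derivative^[k] (rodrigues K l) +
        derivative^[k] (rodrigues K (l - 1)) := by
  have hEuler : derivative (rodrigues K l) * X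
      = ((2 * l : ℤ) : K[X]) * rodrigues K l + rodrigues K (l - 1) := by
    have hpred := X_sq_sub_one_mul_rodrigues (K := K) (l - 1)
    have hderiv := derivative_rodrigues_succ (K := K) (l - 1)
    rw [sub_add_cancel] at hpred hderiv
    rw [hderiv]
    linear_combination hpred
  have h := congrArg (derivative^[k]) hEuler
  rw [iterate_derivative_derivative_mul_X, iterate_map_add, iterate_derivative_intCast_mul] at h
  push_cast [nsmul_eq_mul] at h
  linear_combination h

theorem iterate_derivative_rodrigues_eq_sub (l : ℤ) (k : ℕ) :
    (2 * (l : K[X]) + 1) * derivative^[k] (rodrigues K l) =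
      derivative^[k + 2] (rodrigues K (l + 1)) - derivative^[k] (rodrigues K (l - 1)) := by
  rw [Function.iterate_succ_apply, derivative_rodrigues_succ, iterate_derivative_mul_X,
    iterate_derivative_succ_rodrigues_mul_X, nsmul_eq_mul, Nat.add_sub_cancel]
  push_cast
  ring

theorem X_mul_iterate_derivative_rodrigues (l : ℤ) (k : ℕ) :
    (2 * (l : K[X]) + 1) * X * derivative^[k] (rodrigues K l) =
      (2 * (l : K[X]) + 1 - (k : K[X])) * derivative^[k + 1] (rodrigues K (l + 1)) +
        (k : K[X]) * derivative^[k - 1] (rodrigues K (l - 1)) := by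
  rw [Function.iterate_succ_apply, derivative_rodrigues_succ, iterate_derivative_mul_X,
    nsmul_eq_mul]
  obtain _ | k := k
  · simp only [Function.iterate_zero_apply, Nat.cast_zero, zero_mul, add_zero, sub_zero]
    ring
  · have h := iterate_derivative_succ_rodrigues_mul_X (K := K) l k
    push_cast [Nat.add_sub_cancel]
    linear_combination ((k : K[X]) + 1) * h

theorem X_sq_sub_one_mul_iterate_derivative_rodrigues (l : ℤ) (k : ℕ) :
    (2 * (l : K[X]) + 1) * (X ^ 2 - 1) * derivative^[k] (rodrigues K l) =
      (2 * (l : K[X]) + 1 - (k : K[X])) * (2 * (l : K[X]) + 2 - (k : K[X])) *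
          derivative^[k] (rodrigues K (l + 1)) -
        (k : K[X]) * ((k : K[X]) - 1) * derivative^[k - 2] (rodrigues K (l - 1)) := by
  have hLeibniz := congrArg (derivative^[k]) (X_sq_sub_one_mul_rodrigues (K := K) l)
  rw [iterate_derivative_intCast_mul,
    show (X ^ 2 - 1) * rodrigues K l = rodrigues K l * X * X - rodrigues K l by ring,
    iterate_derivative_sub, iterate_derivative_mul_X, iterate_derivative_mul_X,
    iterate_derivative_mul_X] at hLeibniz
  push_cast [nsmul_eq_mul] at hLeibniz
  obtain _ | _ | k := k
  · simp only [Function.iterate_zero_apply, Nat.cast_zero, zero_mul, add_zero] at hLeibniz ⊢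
    linear_combination (2 * (l : K[X]) + 1) * hLeibniz
  · have hX := X_mul_iterate_derivative_rodrigues (K := K) l 0
    simp only [zero_add, Nat.sub_self, Function.iterate_zero_apply, Nat.cast_zero, Nat.cast_one,
      zero_mul, add_zero] at hLeibniz hX ⊢
    linear_combination (2 * (l : K[X]) + 1) * hLeibniz - 2 * hX
  · have hX := X_mul_iterate_derivative_rodrigues (K := K) l (k + 1)
    have hsub := iterate_derivative_rodrigues_eq_sub (K := K) l k
    simp only [Nat.add_sub_cancel, show k + 2 - 1 = k + 1 by omega] at hLeibniz hX ⊢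
    push_cast at hLeibniz hX ⊢
    linear_combination (2 * (l : K[X]) + 1) * hLeibniz - 2 * ((k : K[X]) + 2) * hX
      - ((k : K[X]) + 2) * ((k : K[X]) + 1) * hsub

end Rodrigues
section AssociatedLegendre

open Polynomial

theorem iteratedDeriv_polynomial_eval {𝕜 : Type*} [NontriviallyNormedField 𝕜] (p : 𝕜[X]) (k : ℕ) :
    iteratedDeriv k (fun y => p.eval y) = fun y => (derivative^[k] p).eval y := by
  induction k with
  | zero => simp
  | succ k ih =>
    funext x
    rw [iteratedDeriv_succ, ih, Polynomial.deriv, Function.iterate_succ_apply']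

theorem neg_one_zpow_mul_rpow_div_two (m : ℤ) {y : ℝ} (hy : 0 ≤ y) :
    (-1 : ℝ) ^ m * y ^ ((m : ℝ) / 2) = (-√y) ^ m := by
  rw [rpow_div_two_eq_sqrt _ hy, rpow_intCast, ← mul_zpow, neg_one_mul]

/-- The associated Legendre function `P_l^m` with the convention `P_l^m = 0` unless `|m| ≤ l`,
matching the convention of `sphHarmZ`. -/
def assocLegendreZ (l m : ℤ) (x : ℝ) : ℝ :=
  if |m| ≤ l then assocLegendre l.toNat m x else 0

theorem assocLegendreZ_of_abs_le {l m : ℤ} (h : |m| ≤ l) (x : ℝ) :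
    assocLegendreZ l m x = assocLegendre l.toNat m x := if_pos h

theorem assocLegendreZ_of_lt_abs {l m : ℤ} (h : l < |m|) (x : ℝ) : assocLegendreZ l m x = 0 :=
  if_neg h.not_ge

variable {l m : ℤ} {x : ℝ}

theorem assocLegendreZ_eq_zpow_mul_eval {k : ℕ} (hk : l + m = k) (hx : x ^ 2 ≤ 1) :
    assocLegendreZ l m x =
      (-√(1 - x ^ 2)) ^ m * (derivative^[k] (rodrigues ℝ l)).eval x := by
  obtain h | h := lt_or_ge l |m|
  · have hzero : derivative^[k] (rodrigues ℝ l) = 0 := by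
      obtain hl | _ := lt_or_ge l 0
      · rw [rodrigues_of_neg ℝ hl, iterate_derivative_zero]
      · exact iterate_derivative_rodrigues_eq_zero ℝ (by grind)
    rw [assocLegendreZ_of_lt_abs h, hzero, eval_zero, mul_zero]
  lift l to ℕ using (abs_nonneg m).trans h
  have hpoly : (fun y : ℝ => (y ^ 2 - 1) ^ l) = fun y => ((X ^ 2 - 1 : ℝ[X]) ^ l).eval y := by
    simp
  rw [assocLegendreZ_of_abs_le h, assocLegendre, Int.toNat_natCast, hk, Int.toNat_natCast, hpoly,
    iteratedDeriv_polynomial_eval, neg_one_zpow_mul_rpow_div_two m (by linarith), rodrigues_natCast,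
    iterate_derivative_C_mul, eval_mul, eval_C]
  ring

theorem mul_assocLegendreZ (hm : 0 ≤ l + m) (hx : x ^ 2 ≤ 1) :
    (2 * l + 1) * (x * assocLegendreZ l m x) =
      (l - m + 1) * assocLegendreZ (l + 1) m x + (l + m) * assocLegendreZ (l - 1) m x := by
  obtain ⟨k, hk⟩ := Int.eq_ofNat_of_zero_le hm
  have hlow : (k : ℝ) * assocLegendreZ (l - 1) m x =
      (-√(1 - x ^ 2)) ^ m * (k * (derivative^[k - 1] (rodrigues ℝ (l - 1))).eval x) := by
    obtain rfl | hk0 := k.eq_zero_or_pos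
    · simp
    · rw [assocLegendreZ_eq_zpow_mul_eval (k := k - 1) (by omega) hx]
      ring
  have hrec := congrArg (eval x) (X_mul_iterate_derivative_rodrigues (K := ℝ) l k)
  have hkR : (l + m : ℝ) = k := by exact_mod_cast hk
  simp only [eval_add, eval_mul, eval_sub, eval_intCast, eval_natCast, eval_ofNat, eval_one,
    eval_X] at hrec
  rw [hkR, hlow, assocLegendreZ_eq_zpow_mul_eval hk hx,
    assocLegendreZ_eq_zpow_mul_eval (k := k + 1) (by omega) hx]
  linear_combination (-√(1 - x ^ 2)) ^ m * hrec +
    (-√(1 - x ^ 2)) ^ m * (derivative^[k + 1] (rodrigues ℝ (l + 1))).eval x * hkR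

theorem neg_sqrt_mul_assocLegendreZ_eq_raise (hm : 0 ≤ l + m) (hx : x ^ 2 ≤ 1) :
    (2 * l + 1) * (-√(1 - x ^ 2) * assocLegendreZ l m x) =
      assocLegendreZ (l + 1) (m + 1) x - assocLegendreZ (l - 1) (m + 1) x := by
  obtain ⟨k, hk⟩ := Int.eq_ofNat_of_zero_le hm
  rw [assocLegendreZ_eq_zpow_mul_eval hk hx,
    assocLegendreZ_eq_zpow_mul_eval (l := l + 1) (k := k + 2) (by push_cast; omega) hx,
    assocLegendreZ_eq_zpow_mul_eval (l := l - 1) (k := k) (by omega) hx]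
  have hsq : (-√(1 - x ^ 2)) ^ 2 = 1 - x ^ 2 := by rw [neg_sq, sq_sqrt (by linarith)]
  set s := -√(1 - x ^ 2)
  have hpow : s * s ^ m * (derivative^[k] (rodrigues ℝ l)).eval x =
      s ^ (m + 1) * (derivative^[k] (rodrigues ℝ l)).eval x := by
    by_cases h : s ≠ 0 ∨ m + 1 ≠ 0
    · rw [zpow_add' (by tauto), zpow_one, mul_comm s]
    -- Here the powers are `0 * 0⁻¹ = 0` and `0 ^ 0 = 1`, but the polynomial vanishes at `±1`.
    · have hx1 : x ^ 2 = 1 := by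
        have : s = 0 := by tauto
        rw [this] at hsq
        linarith
      rw [eval_iterate_derivative_rodrigues_eq_zero (by omega) hx1, mul_zero, mul_zero]
  have hrec := congrArg (eval x) (iterate_derivative_rodrigues_eq_sub (K := ℝ) l k)
  simp only [eval_add, eval_mul, eval_sub, eval_intCast, eval_ofNat, eval_one] at hrec
  linear_combination (2 * (l : ℝ) + 1) * hpow + s ^ (m + 1) * hrec

theorem neg_sqrt_mul_assocLegendreZ_eq_lower (hm : 0 ≤ l + m) (hx : x ^ 2 ≤ 1) :
    (2 * l + 1) * (-√(1 - x ^ 2) * assocLegendreZ l m x) =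
      (l + m) * (l + m - 1) * assocLegendreZ (l - 1) (m - 1) x -
      (l - m + 1) * (l - m + 2) * assocLegendreZ (l + 1) (m - 1) x := by
  obtain ⟨k, hk⟩ := Int.eq_ofNat_of_zero_le hm
  have hlow : (k : ℝ) * (k - 1) * assocLegendreZ (l - 1) (m - 1) x =
      (-√(1 - x ^ 2)) ^ (m - 1) *
        (k * (k - 1) * (derivative^[k - 2] (rodrigues ℝ (l - 1))).eval x) := by
    obtain rfl | rfl | hk2 : k = 0 ∨ k = 1 ∨ 2 ≤ k := by omega
    · simp
    · simp
    · rw [assocLegendreZ_eq_zpow_mul_eval (k := k - 2) (by omega) hx]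
      ring
  have hkR : (l + m : ℝ) = k := by exact_mod_cast hk
  rw [hkR, hlow, assocLegendreZ_eq_zpow_mul_eval hk hx,
    assocLegendreZ_eq_zpow_mul_eval (l := l + 1) (k := k) (by omega) hx]
  have hsq : (-√(1 - x ^ 2)) ^ 2 = 1 - x ^ 2 := by rw [neg_sq, sq_sqrt (by linarith)]
  set s := -√(1 - x ^ 2)
  have hpow : s * s ^ m = s ^ (m - 1) * s ^ 2 := by
    obtain hs | hs := eq_or_ne s 0
    · simp [hs]
    · rw [zpow_sub_one₀ hs]
      field_simp
  have hrec := congrArg (eval x) (X_sq_sub_one_mul_iterate_derivative_rodrigues (K := ℝ) l k)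
  simp only [eval_add, eval_mul, eval_sub, eval_pow, eval_X, eval_intCast, eval_natCast,
    eval_ofNat, eval_one] at hrec
  have hm' : (m : ℝ) = k - l := by linarith
  rw [hm']
  linear_combination (2 * (l : ℝ) + 1) * (derivative^[k] (rodrigues ℝ l)).eval x *
    (hpow + s ^ (m - 1) * hsq) - s ^ (m - 1) * hrec

theorem derivative_rodrigues_one : derivative (rodrigues ℝ 1) = X := by
  have h := derivative_rodrigues_succ (K := ℝ) 0
  simpa [rodrigues] using h

theorem assocLegendreZ_one_zero (hx : x ^ 2 ≤ 1) : assocLegendreZ 1 0 x = x := by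
  rw [assocLegendreZ_eq_zpow_mul_eval (k := 1) (by norm_num) hx]
  simp [derivative_rodrigues_one]

theorem assocLegendreZ_one_one (hx : x ^ 2 ≤ 1) : assocLegendreZ 1 1 x = -√(1 - x ^ 2) := by
  rw [assocLegendreZ_eq_zpow_mul_eval (k := 2) (by norm_num) hx]
  simp [derivative_rodrigues_one]

theorem assocLegendreZ_one_neg_one (hx : x ^ 2 ≤ 1) :
    assocLegendreZ 1 (-1) x = √(1 - x ^ 2) / 2 := by
  have hsq : √(1 - x ^ 2) ^ 2 = 1 - x ^ 2 := sq_sqrt (by linarith)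
  rw [assocLegendreZ_eq_zpow_mul_eval (k := 0) (by norm_num) hx]
  have heval : (rodrigues ℝ 1).eval x = (x ^ 2 - 1) / 2 := by simp [rodrigues, div_eq_inv_mul]
  rw [Function.iterate_zero_apply, heval, show x ^ 2 - 1 = -√(1 - x ^ 2) ^ 2 by linarith]
  obtain hs | hs := eq_or_ne √(1 - x ^ 2) 0
  · simp [hs]
  · rw [zpow_neg_one]
    field_simp

end AssociatedLegendre

section Normalization

open scoped Nat

/-- The factorial of an integer, used for the factorials `(l ± m)!` of the normalization constants.
Its value at a negative integer is `0! = 1`. -/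
def intFactorial (z : ℤ) : ℝ := (z.toNat ! : ℝ)

theorem intFactorial_pos (z : ℤ) : 0 < intFactorial z :=
  Nat.cast_pos.mpr (Nat.factorial_pos _)

theorem intFactorial_zero : intFactorial 0 = 1 := by
  simp [intFactorial]

theorem intFactorial_one : intFactorial 1 = 1 := by
  simp [intFactorial]

theorem intFactorial_two : intFactorial 2 = 2 := by
  simp [intFactorial]

theorem intFactorial_add_one_div {z : ℤ} (hz : 0 ≤ z) :
    intFactorial (z + 1) / intFactorial z = z + 1 := by
  rw [div_eq_iff (intFactorial_pos z).ne']
  lift z to ℕ using hz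
  simp only [intFactorial, Int.toNat_natCast, Int.toNat_natCast_add_one, Nat.factorial_succ,
    Nat.cast_mul, Nat.cast_succ, Int.cast_natCast]

theorem intFactorial_add_two_div {z : ℤ} (hz : 0 ≤ z) :
    intFactorial (z + 2) / intFactorial z = (z + 2) * (z + 1) := by
  have h := intFactorial_add_one_div (z := z + 1) (by omega)
  rw [add_assoc, one_add_one_eq_two] at h
  rw [← div_mul_div_cancel₀ (intFactorial_pos (z + 1)).ne', h, intFactorial_add_one_div hz]
  push_cast
  ring

theorem intFactorial_div_sub_one_mul_assocLegendreZ (l m : ℤ) (x : ℝ) :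
    intFactorial (l + m) / intFactorial (l + m - 1) * assocLegendreZ (l - 1) m x =
      (l + m) * assocLegendreZ (l - 1) m x := by
  obtain h | h := lt_or_ge (l - 1) |m|
  · rw [assocLegendreZ_of_lt_abs h, mul_zero, mul_zero]
  · have hdiv := intFactorial_add_one_div (z := l + m - 1) (by grind)
    rw [sub_add_cancel] at hdiv
    rw [hdiv]
    push_cast
    ring

theorem intFactorial_div_sub_two_mul_assocLegendreZ (l m : ℤ) (x : ℝ) :
    intFactorial (l + m) / intFactorial (l + m - 2) * assocLegendreZ (l - 1) (m - 1) x =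
      (l + m) * (l + m - 1) * assocLegendreZ (l - 1) (m - 1) x := by
  obtain h | h := lt_or_ge (l - 1) |m - 1|
  · rw [assocLegendreZ_of_lt_abs h, mul_zero, mul_zero]
  · have hdiv := intFactorial_add_two_div (z := l + m - 2) (by grind)
    rw [sub_add_cancel] at hdiv
    rw [hdiv]
    push_cast
    ring

theorem assocLegendreZ_one_mul_assocLegendreZ {l m μ : ℤ} {x : ℝ} (hm : |m| ≤ l)
    (hμ : μ = -1 ∨ μ = 0 ∨ μ = 1) (hx : x ^ 2 ≤ 1) :
    (2 * l + 1) * (intFactorial (1 - μ) * assocLegendreZ 1 μ x * assocLegendreZ l m x) =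
      intFactorial (l + 1 - (m + μ)) / intFactorial (l - m) * assocLegendreZ (l + 1) (m + μ) x +
        (-1) ^ μ * (intFactorial (l + m) / intFactorial (l - 1 + (m + μ)) *
          assocLegendreZ (l - 1) (m + μ) x) := by
  obtain ⟨hml, hlm⟩ := abs_le.mp hm
  obtain rfl | rfl | rfl := hμ
  · have hup := intFactorial_add_two_div (z := l - m) (by omega)
    have hrec := neg_sqrt_mul_assocLegendreZ_eq_lower (l := l) (m := m) (by omega) hx
    rw [show l + 1 - (m + -1) = l - m + 2 by ring, show l - 1 + (m + -1) = l + m - 2 by ring,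
      ← sub_eq_add_neg, intFactorial_div_sub_two_mul_assocLegendreZ, hup,
      assocLegendreZ_one_neg_one hx, show (1 : ℤ) - -1 = 2 by norm_num, intFactorial_two]
    push_cast
    linear_combination -hrec
  · have hup := intFactorial_add_one_div (z := l - m) (by omega)
    rw [add_zero, show l + 1 - m = l - m + 1 by ring, show l - 1 + m = l + m - 1 by ring, hup,
      intFactorial_div_sub_one_mul_assocLegendreZ, assocLegendreZ_one_zero hx, sub_zero,
      intFactorial_one]
    push_cast
    linear_combination mul_assocLegendreZ (l := l) (m := m) (by omega) hx
  · rw [show l + 1 - (m + 1) = l - m by ring, show l - 1 + (m + 1) = l + m by ring,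
      div_self (intFactorial_pos _).ne', div_self (intFactorial_pos _).ne',
      assocLegendreZ_one_one hx, sub_self, intFactorial_zero]
    linear_combination neg_sqrt_mul_assocLegendreZ_eq_raise (l := l) (m := m) (by omega) hx

theorem eta_add_one {l m μ : ℤ} (hm : |m| ≤ l) (hμ : μ = -1 ∨ μ = 0 ∨ μ = 1) :
    eta (l + 1) m μ =
      √(intFactorial (l + 1 - (m + μ)) / intFactorial (l - m) *
          (intFactorial (l + 1 + (m + μ)) / intFactorial (l + m)) /
        (2 ^ μ.natAbs * (2 * l + 1) * (2 * l + 3))) := by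
  obtain ⟨hml, hlm⟩ := abs_le.mp hm
  have hsub := (intFactorial_pos (l - m)).ne'
  have hadd := (intFactorial_pos (l + m)).ne'
  rw [eta]
  obtain rfl | rfl | rfl := hμ
  · have h := intFactorial_add_two_div (z := l - m) (by omega)
    rw [show l + 1 - (m + -1) = l - m + 2 by ring, show l + 1 + (m + -1) = l + m by ring, h,
      div_self hadd]
    simp only [kdZ, Int.reduceNeg, Int.reduceEq, ↓reduceIte, Int.natAbs_neg, Int.natAbs_one]
    push_cast
    ring_nf
  · have hs := intFactorial_add_one_div (z := l - m) (by omega)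
    have ha := intFactorial_add_one_div (z := l + m) (by omega)
    rw [add_zero, show l + 1 - m = l - m + 1 by ring, show l + 1 + m = l + m + 1 by ring, hs, ha]
    simp only [kdZ, Int.reduceNeg, Int.reduceEq, ↓reduceIte, Int.natAbs_zero]
    push_cast
    ring_nf
  · have h := intFactorial_add_two_div (z := l + m) (by omega)
    rw [show l + 1 - (m + 1) = l - m by ring, show l + 1 + (m + 1) = l + m + 2 by ring, h,
      div_self hsub]
    simp only [kdZ, Int.reduceNeg, Int.reduceEq, ↓reduceIte, Int.natAbs_one]
    push_cast
    ring_nf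

theorem eta_neg {l m μ : ℤ} (hμ : μ = -1 ∨ μ = 0 ∨ μ = 1) :
    eta (-l) m μ = eta l (m + μ) (-μ) := by
  obtain rfl | rfl | rfl := hμ <;>
    simp only [eta, kdZ, Int.reduceNeg, Int.reduceEq, ↓reduceIte, Int.natAbs_neg, neg_neg,
      neg_zero] <;>
    push_cast <;>
    ring_nf

theorem sqrt_mul_sqrt_eq_mul_sqrt {a b c d : ℝ} (ha : 0 ≤ a) (hc : 0 ≤ c)
    (h : a * b = c ^ 2 * d) : √a * √b = c * √d := by
  rw [← sqrt_mul ha, h, sqrt_mul (sq_nonneg c), sqrt_sq hc]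

/-- The normalization constant of the spherical harmonic `Y_l^m`. -/
def sphHarmNorm (l m : ℤ) : ℝ :=
  √((2 * l + 1) / (4 * π) * intFactorial (l - m) / intFactorial (l + m))

theorem sphHarmNorm_one {μ : ℤ} (hμ : μ = -1 ∨ μ = 0 ∨ μ = 1) :
    sphHarmNorm 1 μ = √(3 / (4 * π)) * (√(1 / 2 ^ μ.natAbs) * intFactorial (1 - μ)) := by
  have hfact : intFactorial (1 - μ) * intFactorial (1 + μ) = 2 ^ μ.natAbs := by
    obtain rfl | rfl | rfl := hμ <;>
      norm_num [intFactorial_zero, intFactorial_one, intFactorial_two]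
  have hadd := (intFactorial_pos (1 + μ)).ne'
  have hsub := (intFactorial_pos (1 - μ)).ne'
  have harg : (2 * (1 : ℤ) + 1) / (4 * π) * intFactorial (1 - μ) / intFactorial (1 + μ) =
      3 / (4 * π) * (1 / 2 ^ μ.natAbs * intFactorial (1 - μ) ^ 2) := by
    rw [← hfact]
    field_simp
    norm_num
  rw [sphHarmNorm, harg, sqrt_mul (by positivity), sqrt_mul (by positivity),
    sqrt_sq (intFactorial_pos _).le]

theorem eta_add_one_mul_sphHarmNorm {l m μ : ℤ} (hm : |m| ≤ l)
    (hμ : μ = -1 ∨ μ = 0 ∨ μ = 1) :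
    eta (l + 1) m μ * sphHarmNorm (l + 1) (m + μ) =
      intFactorial (l + 1 - (m + μ)) / intFactorial (l - m) / (2 * l + 1) *
        (√(1 / 2 ^ μ.natAbs) * sphHarmNorm l m) := by
  have hl : (0 : ℝ) ≤ l := by exact_mod_cast (abs_nonneg m).trans hm
  have h₁ := intFactorial_pos (l + 1 - (m + μ))
  have h₂ := intFactorial_pos (l - m)
  have h₃ := intFactorial_pos (l + 1 + (m + μ))
  have h₄ := intFactorial_pos (l + m)
  rw [eta_add_one hm hμ, sphHarmNorm, sphHarmNorm,
    ← sqrt_mul (x := 1 / 2 ^ μ.natAbs) (by positivity)]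
  refine sqrt_mul_sqrt_eq_mul_sqrt (by positivity) (by positivity) ?_
  push_cast
  field_simp
  ring

theorem eta_neg_mul_sphHarmNorm {l m μ : ℤ} (hm : |m + μ| ≤ l - 1)
    (hμ : μ = -1 ∨ μ = 0 ∨ μ = 1) :
    eta (-l) m μ * sphHarmNorm (l - 1) (m + μ) =
      intFactorial (l + m) / intFactorial (l - 1 + (m + μ)) / (2 * l + 1) *
        (√(1 / 2 ^ μ.natAbs) * sphHarmNorm l m) := by
  obtain ⟨k, rfl⟩ : ∃ k, l = k + 1 := ⟨l - 1, by ring⟩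
  rw [add_sub_cancel_right] at hm ⊢
  have hk : (0 : ℝ) ≤ k := by exact_mod_cast (abs_nonneg _).trans hm
  have h₁ := intFactorial_pos (k + 1 - m)
  have h₂ := intFactorial_pos (k + 1 + m)
  have h₃ := intFactorial_pos (k - (m + μ))
  have h₄ := intFactorial_pos (k + (m + μ))
  rw [eta_neg hμ, eta_add_one hm (by omega), Int.natAbs_neg, add_neg_cancel_right, sphHarmNorm,
    sphHarmNorm, ← sqrt_mul (x := 1 / 2 ^ μ.natAbs) (by positivity)]
  refine sqrt_mul_sqrt_eq_mul_sqrt (by positivity) (by push_cast; positivity) ?_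
  push_cast
  field_simp
  ring

/-- The normalized associated Legendre function, i.e. the real factor of `Y_l^m` depending on the
polar angle only. It vanishes unless `|m| ≤ l`. -/
def normLegendre (l m : ℤ) (x : ℝ) : ℝ := sphHarmNorm l m * assocLegendreZ l m x

theorem normLegendre_mul_normLegendre_one {l m μ : ℤ} {x : ℝ} (hm : |m| ≤ l)
    (hμ : μ = -1 ∨ μ = 0 ∨ μ = 1) (hx : x ^ 2 ≤ 1) :
    normLegendre l m x * normLegendre 1 μ x =
      √(3 / (4 * π)) * (eta (l + 1) m μ * normLegendre (l + 1) (m + μ) x +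
        (-1) ^ μ * eta (-l) m μ * normLegendre (l - 1) (m + μ) x) := by
  have hl : (2 * l + 1 : ℝ) ≠ 0 := by
    have : (0 : ℝ) ≤ l := by exact_mod_cast (abs_nonneg m).trans hm
    positivity
  have hup := eta_add_one_mul_sphHarmNorm hm hμ
  have hlow : eta (-l) m μ * normLegendre (l - 1) (m + μ) x =
      intFactorial (l + m) / intFactorial (l - 1 + (m + μ)) / (2 * l + 1) *
        (√(1 / 2 ^ μ.natAbs) * sphHarmNorm l m) * assocLegendreZ (l - 1) (m + μ) x := by
    obtain h | h := lt_or_ge (l - 1) |m + μ|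
    · rw [normLegendre, assocLegendreZ_of_lt_abs h, mul_zero, mul_zero, mul_zero]
    · rw [normLegendre, ← mul_assoc, eta_neg_mul_sphHarmNorm h hμ]
  have hrec := assocLegendreZ_one_mul_assocLegendreZ hm hμ hx
  rw [mul_assoc ((-1) ^ μ), hlow, normLegendre, normLegendre, normLegendre, sphHarmNorm_one hμ,
    ← mul_assoc (eta _ _ _), hup]
  field_simp
  linear_combination sphHarmNorm l m * hrec

end Normalization

section SphericalHarmonics

/-- The factor `e^{imφ}` of `Y_l^m`, where `φ` is the azimuthal angle of the point `n`. -/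
def azimuthalPhase (m : ℤ) (n : V3) : ℂ :=
  Complex.exp (Complex.I * m * (Complex.arg ((n 0 : ℂ) + n 1 * Complex.I) : ℝ))

theorem azimuthalPhase_add (m m' : ℤ) (n : V3) :
    azimuthalPhase (m + m') n = azimuthalPhase m n * azimuthalPhase m' n := by
  rw [azimuthalPhase, azimuthalPhase, azimuthalPhase, ← Complex.exp_add]
  push_cast
  ring_nf

theorem sphHarm_eq_normLegendre_mul {l : ℕ} {m : ℤ} (hm : |m| ≤ l) (n : V3) :
    sphHarm l m n = normLegendre l m (n 2) * azimuthalPhase m n := by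
  simp only [sphHarm, normLegendre, sphHarmNorm, intFactorial, assocLegendreZ_of_abs_le hm,
    Int.toNat_natCast, Int.cast_natCast, azimuthalPhase]

theorem sphHarmZ_eq_normLegendre_mul (l m : ℤ) (n : V3) :
    sphHarmZ l m n = normLegendre l m (n 2) * azimuthalPhase m n := by
  obtain h | h := lt_or_ge l |m|
  · rw [sphHarmZ, if_neg (by grind), normLegendre, assocLegendreZ_of_lt_abs h, mul_zero,
      Complex.ofReal_zero, zero_mul]
  · lift l to ℕ using (abs_nonneg m).trans h
    rw [sphHarmZ, if_pos (by grind), Int.toNat_natCast, sphHarm_eq_normLegendre_mul h]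

theorem sq_apply_le_one_of_nrm_eq_one {n : V3} (hn : nrm n = 1) (i : Fin 3) : n i ^ 2 ≤ 1 := by
  rw [nrm, sqrt_eq_one] at hn
  exact hn ▸ Finset.single_le_sum (fun j _ => sq_nonneg (n j)) (Finset.mem_univ i)

end SphericalHarmonics

/-- pointwise product formula Y_l^m · Y_1^μ on the unit sphere, with
the convention Y_{l'}^{m'} = 0 when |m'| > l' or l' < 0. -/
theorem sphHarm_mul_Y1 (l : ℕ) (m μ : ℤ) (hm : m.natAbs ≤ l)
    (hμ : μ = -1 ∨ μ = 0 ∨ μ = 1) (n : V3) (hn : nrm n = 1) :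
    sphHarm l m n * sphHarm 1 μ n =
      ((Real.sqrt (3 / (4 * π)) : ℝ) : ℂ) *
        (((eta ((l : ℤ) + 1) m μ : ℝ) : ℂ) * sphHarmZ ((l : ℤ) + 1) (m + μ) n +
          (((-1 : ℝ) ^ μ : ℝ) : ℂ) * ((eta (-(l : ℤ)) m μ : ℝ) : ℂ) *
            sphHarmZ ((l : ℤ) - 1) (m + μ) n) := by
  have hm' : |m| ≤ (l : ℤ) := by grind
  have hμ' : |μ| ≤ ((1 : ℕ) : ℤ) := by grind
  have hprod := congrArg ((↑) : ℝ → ℂ)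
    (normLegendre_mul_normLegendre_one hm' hμ (sq_apply_le_one_of_nrm_eq_one hn 2))
  push_cast at hprod ⊢
  rw [sphHarm_eq_normLegendre_mul hm', sphHarm_eq_normLegendre_mul hμ',
    sphHarmZ_eq_normLegendre_mul, sphHarmZ_eq_normLegendre_mul, azimuthalPhase_add]
  linear_combination azimuthalPhase m n * azimuthalPhase μ n * hprod
end
end

section
/- Let γ > −5 and Λ > 0. For all multi-indices α, λ, κ ∈ ℕ³ with |α| ≥ 1, the coefficient A_α^{λ,κ} := (1/α!) ∫_{ℝ³} H^α(v) ∇_v·∫_{ℝ³} A(v−v*) ( H^λ(v*)M(v*) ∇_v(H^κ(v)M(v)) − H^λ(v)M(v) ∇_{v*}(H^κ(v*)M(v*)) ) dv* dv can be rewritten, after integration by parts, as A_α^{λ,κ} = Σ_{s,t=1}^{3} (Λ/(α−e_s)!) ∫_{ℝ³×ℝ³} |v−v*|^γ ( δ_{st}|v−v*|² − (v−v*)_s (v−v*)_t ) H^{α−e_s}(v) M(v) M(v*) ( H^λ(v*) H^{κ+e_t}(v) − H^λ(v) H^{κ+e_t}(v*) ) dv dv*, where terms with α_s = 0 are omitted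 and e_s is the s-th unit multi-index. -/
open MeasureTheory Real
open scoped BigOperators Classical

noncomputable section

/-!
The products `H^κ M` are Schwartz functions, and since `γ + 2 > -3` the matrix entries `A_{ij}` are
locally integrable with polynomial growth. Convolving such a kernel with a Schwartz function gives a
smooth function of temperate growth, so each component `F_s` of the collision flux is a Schwartz
function, despite the singularity of `A` at the origin. Integration by parts against the polynomial
`H^α` therefore has no boundary term: `∫ H^α ∂_s F_s = -∫ ∂_s H^α F_s`. Now substitute
`∂_s H^α = α_s H^{α - e_s}` and `∂_t (H^κ M) = -H^{κ + e_t} M`, apply Fubini's theorem to the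
absolutely integrable double integral, and cancel `α! = α_s (α - e_s)!`.
-/

open SchwartzMap Function ContinuousLinearMap
open scoped Convolution SchwartzMap ContDiff LineDeriv

section Peetre

variable {E : Type*} [SeminormedAddCommGroup E]

lemma one_add_norm_le_one_add_norm_mul_one_add_norm_sub (x t : E) :
    1 + ‖t‖ ≤ (1 + ‖x‖) * (1 + ‖x - t‖) := by
  have triangle : ‖t‖ ≤ ‖x‖ + ‖x - t‖ := by
    simpa using norm_sub_le x (x - t)
  nlinarith [mul_nonneg (norm_nonneg x) (norm_nonneg (x - t))]

lemma continuous_one_add_norm_pow (n : ℕ) : Continuous fun x : E ↦ (1 + ‖x‖) ^ n := by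
  fun_prop

lemma one_add_norm_pow_pos (n : ℕ) (x : E) : 0 < (1 + ‖x‖) ^ n := by
  positivity

end Peetre

section SchwartzDecay

variable {E F : Type*} [NormedAddCommGroup E] [NormedSpace ℝ E]
  [NormedAddCommGroup F] [NormedSpace ℝ F]

lemma exists_one_add_norm_pow_mul_norm_le (f : 𝓢(E, F)) (n : ℕ) :
    ∃ C, 0 ≤ C ∧ ∀ x, (1 + ‖x‖) ^ n * ‖f x‖ ≤ C :=
  ⟨2 ^ n * ((Finset.Iic (n, 0)).sup fun m ↦ SchwartzMap.seminorm ℝ m.1 m.2) f, by positivity,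
    fun x ↦ by
      simpa using one_add_le_sup_seminorm_apply (𝕜 := ℝ) (m := (n, 0)) le_rfl le_rfl f x⟩

lemma exists_one_add_norm_pow_mul_norm_sub_le (f : 𝓢(E, F)) (n : ℕ) :
    ∃ C, 0 ≤ C ∧ ∀ x t, (1 + ‖t‖) ^ n * ‖f (x - t)‖ ≤ C * (1 + ‖x‖) ^ n := by
  obtain ⟨C, hC, bound⟩ := exists_one_add_norm_pow_mul_norm_le f n
  refine ⟨C, hC, fun x t ↦ ?_⟩
  calc (1 + ‖t‖) ^ n * ‖f (x - t)‖
      ≤ ((1 + ‖x‖) * (1 + ‖x - t‖)) ^ n * ‖f (x - t)‖ := by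
        gcongr
        exact one_add_norm_le_one_add_norm_mul_one_add_norm_sub x t
    _ = (1 + ‖x - t‖) ^ n * ‖f (x - t)‖ * (1 + ‖x‖) ^ n := by rw [mul_pow]; ring
    _ ≤ C * (1 + ‖x‖) ^ n := by
        gcongr
        exact bound _

lemma hasTemperateGrowth_fderiv_apply {φ : E → F} (hφ : φ.HasTemperateGrowth) (m : E) :
    (fun x ↦ fderiv ℝ φ x m).HasTemperateGrowth := by
  have hφ' : (fderiv ℝ φ).HasTemperateGrowth := by
    refine ⟨hφ.1.fderiv_right (by simp), fun n ↦ ?_⟩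
    obtain ⟨k, C, bound⟩ := hφ.2 (n + 1)
    exact ⟨k, C, fun x ↦ norm_iteratedFDeriv_fderiv.trans_le (bound x)⟩
  exact (ContinuousLinearMap.apply ℝ F m).hasTemperateGrowth.comp hφ'

end SchwartzDecay

section TemperateKernel

variable {E : Type*} [NormedAddCommGroup E] [MeasurableSpace E]

/-- A scalar kernel that is integrable against some inverse polynomial weight, so that it can be
convolved with every Schwartz function; local singularities are allowed. -/
def IsTemperateKernel (K : E → ℝ) (μ : Measure E) : Prop :=
  ∃ n : ℕ, Integrable (fun x ↦ ((1 + ‖x‖) ^ n)⁻¹ * K x) μ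

namespace IsTemperateKernel

variable {K : E → ℝ} {μ : Measure E}

section Bounds

variable [NormedSpace ℝ E] {F : Type*} [NormedAddCommGroup F] [NormedSpace ℝ F]

lemma exists_norm_smul_comp_sub_le (hK : IsTemperateKernel K μ) (f : 𝓢(E, F)) :
    ∃ n : ℕ, ∃ w : E → ℝ, Integrable w μ ∧
      ∀ x t, ‖K t • f (x - t)‖ ≤ (1 + ‖x‖) ^ n * w t := by
  obtain ⟨n, hn⟩ := hK
  obtain ⟨C, -, bound⟩ := exists_one_add_norm_pow_mul_norm_sub_le f n
  refine ⟨n, fun t ↦ C * ‖((1 + ‖t‖) ^ n)⁻¹ * K t‖, hn.norm.const_mul C, fun x t ↦ ?_⟩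
  have weight_pos := one_add_norm_pow_pos n t
  calc ‖K t • f (x - t)‖
      = ((1 + ‖t‖) ^ n * ‖f (x - t)‖) * ‖((1 + ‖t‖) ^ n)⁻¹ * K t‖ := by
        rw [norm_smul, norm_mul, norm_inv, Real.norm_of_nonneg weight_pos.le]
        field_simp
    _ ≤ (C * (1 + ‖x‖) ^ n) * ‖((1 + ‖t‖) ^ n)⁻¹ * K t‖ := by
        gcongr ?_ * _
        exact bound x t
    _ = (1 + ‖x‖) ^ n * (C * ‖((1 + ‖t‖) ^ n)⁻¹ * K t‖) := by ring

lemma exists_norm_convolution_le (hK : IsTemperateKernel K μ) (f : 𝓢(E, F)) :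
    ∃ (n : ℕ) (C : ℝ), ∀ x, ‖(K ⋆[lsmul ℝ ℝ, μ] f) x‖ ≤ C * (1 + ‖x‖) ^ n := by
  obtain ⟨n, w, hw, bound⟩ := hK.exists_norm_smul_comp_sub_le f
  refine ⟨n, ∫ t, w t ∂μ, fun x ↦ ?_⟩
  calc ‖(K ⋆[lsmul ℝ ℝ, μ] f) x‖
      ≤ ∫ t, (1 + ‖x‖) ^ n * w t ∂μ :=
        norm_integral_le_of_norm_le (hw.const_mul _) (.of_forall (bound x))
    _ = (∫ t, w t ∂μ) * (1 + ‖x‖) ^ n := by rw [integral_const_mul, mul_comm]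

end Bounds

variable [BorelSpace E]

lemma aestronglyMeasurable (hK : IsTemperateKernel K μ) : AEStronglyMeasurable K μ := by
  obtain ⟨n, hn⟩ := hK
  refine ((continuous_one_add_norm_pow n).aestronglyMeasurable.mul
    hn.aestronglyMeasurable).congr (.of_forall fun x ↦ ?_)
  exact mul_inv_cancel_left₀ (one_add_norm_pow_pos n x).ne' (K x)

variable [NormedSpace ℝ E] [SecondCountableTopology E]
  {F : Type*} [NormedAddCommGroup F] [NormedSpace ℝ F]

lemma aestronglyMeasurable_smul_comp_sub (hK : IsTemperateKernel K μ) (f : 𝓢(E, F)) (x : E) :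
    AEStronglyMeasurable (fun t ↦ K t • f (x - t)) μ :=
  hK.aestronglyMeasurable.smul
    (f.continuous.comp (continuous_sub_left x)).aestronglyMeasurable

lemma convolutionExists (hK : IsTemperateKernel K μ) (f : 𝓢(E, F)) :
    ConvolutionExists K f (lsmul ℝ ℝ) μ := fun x ↦ by
  obtain ⟨n, w, hw, bound⟩ := hK.exists_norm_smul_comp_sub_le f
  exact (hw.const_mul _).mono' (hK.aestronglyMeasurable_smul_comp_sub f x) (.of_forall (bound x))

lemma hasFDerivAt_convolution (hK : IsTemperateKernel K μ) (f : 𝓢(E, F)) (x : E) :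
    HasFDerivAt (K ⋆[lsmul ℝ ℝ, μ] f) ((K ⋆[lsmul ℝ ℝ, μ] fderivCLM ℝ E F f) x) x := by
  obtain ⟨n, w, hw, bound⟩ := hK.exists_norm_smul_comp_sub_le (fderivCLM ℝ E F f)
  refine hasFDerivAt_integral_of_dominated_of_fderiv_le
    (F' := fun y t ↦ K t • fderivCLM ℝ E F f (y - t)) (Metric.ball_mem_nhds x one_pos)
    (.of_forall (hK.aestronglyMeasurable_smul_comp_sub f)) (hK.convolutionExists f x)
    (hK.aestronglyMeasurable_smul_comp_sub _ x) (.of_forall fun t y hy ↦ ?_)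
    (hw.norm.const_mul ((2 + ‖x‖) ^ n)) (.of_forall fun t y _ ↦ ?_)
  · have hy' : ‖y‖ ≤ 1 + ‖x‖ := by
      linarith [norm_le_norm_add_norm_sub' y x, mem_ball_iff_norm.1 hy]
    calc ‖K t • fderivCLM ℝ E F f (y - t)‖
        ≤ (1 + ‖y‖) ^ n * ‖w t‖ := (bound y t).trans (by gcongr; exact le_abs_self _)
      _ ≤ (2 + ‖x‖) ^ n * ‖w t‖ := by gcongr ?_ ^ n * _; linarith
  · exact ((hasFDerivAt_comp_sub t).2 (f.hasFDerivAt (y - t))).const_smul (K t)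

lemma fderiv_convolution (hK : IsTemperateKernel K μ) (f : 𝓢(E, F)) :
    fderiv ℝ (K ⋆[lsmul ℝ ℝ, μ] f) = K ⋆[lsmul ℝ ℝ, μ] fderivCLM ℝ E F f :=
  funext fun x ↦ (hK.hasFDerivAt_convolution f x).fderiv

universe u v

-- The target and the space of derivatives must live in one universe for the induction on the order.
section SmoothOfUniverse

variable {E : Type u} {F : Type (max u v)} [NormedAddCommGroup E] [NormedSpace ℝ E]
  [MeasurableSpace E] [BorelSpace E] [SecondCountableTopology E] [NormedAddCommGroup F]
  [NormedSpace ℝ F] {K : E → ℝ} {μ : Measure E}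

lemma contDiff_convolution (hK : IsTemperateKernel K μ) (f : 𝓢(E, F)) (n : ℕ) :
    ContDiff ℝ n (K ⋆[lsmul ℝ ℝ, μ] f) := by
  induction n generalizing F with
  | zero =>
    exact contDiff_zero.2 <| continuous_iff_continuousAt.2 fun x ↦
      (hK.hasFDerivAt_convolution f x).continuousAt
  | succ n ih =>
    rw [Nat.cast_succ, contDiff_succ_iff_fderiv, hK.fderiv_convolution]
    exact ⟨fun x ↦ (hK.hasFDerivAt_convolution f x).differentiableAt, by simp, ih _⟩

lemma exists_norm_iteratedFDeriv_convolution_le (hK : IsTemperateKernel K μ) (f : 𝓢(E, F))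
    (n : ℕ) : ∃ (k : ℕ) (C : ℝ),
      ∀ x, ‖iteratedFDeriv ℝ n (K ⋆[lsmul ℝ ℝ, μ] f) x‖ ≤ C * (1 + ‖x‖) ^ k := by
  induction n generalizing F with
  | zero => simpa only [norm_iteratedFDeriv_zero] using hK.exists_norm_convolution_le f
  | succ n ih =>
    simp_rw [← norm_iteratedFDeriv_fderiv, hK.fderiv_convolution]
    exact ih _

lemma hasTemperateGrowth_convolution_of_universe (hK : IsTemperateKernel K μ) (f : 𝓢(E, F)) :
    (K ⋆[lsmul ℝ ℝ, μ] f).HasTemperateGrowth :=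
  ⟨contDiff_infty.2 (hK.contDiff_convolution f), hK.exists_norm_iteratedFDeriv_convolution_le f⟩

end SmoothOfUniverse

lemma hasTemperateGrowth_convolution (hK : IsTemperateKernel K μ) (f : 𝓢(E, F)) :
    (K ⋆[lsmul ℝ ℝ, μ] f).HasTemperateGrowth := by
  obtain ⟨n, C, bound⟩ := hK.exists_norm_convolution_le f
  refine .of_fderiv ?_ (fun x ↦ (hK.hasFDerivAt_convolution f x).differentiableAt) bound
  rw [hK.fderiv_convolution]
  exact hK.hasTemperateGrowth_convolution_of_universe _

end IsTemperateKernel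

end TemperateKernel

section Fubini

variable {E : Type*} [NormedAddCommGroup E] [NormedSpace ℝ E] [MeasurableSpace E] [BorelSpace E]
  [SecondCountableTopology E] {μ : Measure E}

lemma integrable_one_add_norm_pow_mul_norm {F : Type*} [NormedAddCommGroup F] [NormedSpace ℝ F]
    [μ.HasTemperateGrowth] (f : 𝓢(E, F)) (n : ℕ) :
    Integrable (fun x ↦ (1 + ‖x‖) ^ n * ‖f x‖) μ := by
  have dominated : ∀ x, (1 + ‖x‖) ^ n * ‖f x‖ ≤ 2 ^ (n - 1) * (‖f x‖ + ‖x‖ ^ n * ‖f x‖) := by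
    intro x
    calc (1 + ‖x‖) ^ n * ‖f x‖
        ≤ 2 ^ (n - 1) * (1 ^ n + ‖x‖ ^ n) * ‖f x‖ := by
          gcongr
          exact add_pow_le zero_le_one (norm_nonneg x) n
      _ = 2 ^ (n - 1) * (‖f x‖ + ‖x‖ ^ n * ‖f x‖) := by ring
  refine ((f.integrable.norm.add (f.integrable_pow_mul μ n)).const_mul (2 ^ (n - 1))).mono'
    ((continuous_one_add_norm_pow n).mul f.continuous.norm).aestronglyMeasurable
    (.of_forall fun x ↦ ?_)
  rw [Real.norm_of_nonneg (by positivity)]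
  exact dominated x

lemma IsTemperateKernel.integrable_prod_mul_sub_mul [SFinite μ] [μ.IsAddRightInvariant]
    [μ.HasTemperateGrowth] {K : E → ℝ} (hK : IsTemperateKernel K μ) (ψ f : 𝓢(E, ℝ)) :
    Integrable (fun z : E × E ↦ ψ z.1 * (K (z.1 - z.2) * f z.2)) (μ.prod μ) := by
  obtain ⟨n, hn⟩ := hK
  obtain ⟨C, -, bound⟩ := exists_one_add_norm_pow_mul_norm_sub_le ψ n
  have hf : Integrable (fun u ↦ (1 + ‖u‖) ^ n * f u) μ :=
    (integrable_one_add_norm_pow_mul_norm f n).mono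
      ((continuous_one_add_norm_pow n).mul f.continuous).aestronglyMeasurable
      (.of_forall fun u ↦ by simp)
  have weight_continuous : Continuous fun z : E × E ↦
      ψ z.1 * (1 + ‖z.1 - z.2‖) ^ n * ((1 + ‖z.2‖) ^ n)⁻¹ :=
    ((ψ.continuous.comp continuous_fst).mul
      ((continuous_one_add_norm_pow n).comp continuous_sub)).mul
      (((continuous_one_add_norm_pow n).comp continuous_snd).inv₀
        fun z ↦ (one_add_norm_pow_pos n z.2).ne')
  refine ((hf.convolution_integrand (lsmul ℝ ℝ) hn).bdd_mul (c := C)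
    weight_continuous.aestronglyMeasurable (.of_forall fun z ↦ ?_)).congr (.of_forall fun z ↦ ?_)
  · have := bound z.2 (z.2 - z.1)
    rw [sub_sub_cancel, norm_sub_rev] at this
    rw [norm_mul, norm_mul, norm_inv, norm_pow, norm_pow,
      Real.norm_of_nonneg (by positivity : 0 ≤ 1 + ‖z.1 - z.2‖),
      Real.norm_of_nonneg (by positivity : 0 ≤ 1 + ‖z.2‖), ← div_eq_mul_inv,
      div_le_iff₀ (one_add_norm_pow_pos n z.2), mul_comm]
    exact this
  · simp only [lsmul_apply, smul_eq_mul]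
    field_simp

end Fubini

section PowerSingularity

variable {E : Type*} [NormedAddCommGroup E] [NormedSpace ℝ E] [MeasurableSpace E] [BorelSpace E]
  [FiniteDimensional ℝ E] [Nontrivial E] {μ : Measure E} [μ.IsAddHaarMeasure]

lemma IsTemperateKernel.of_norm_le_rpow {K : E → ℝ} {C p : ℝ} (hK : AEStronglyMeasurable K μ)
    (hp : -(Module.finrank ℝ E : ℝ) < p) (bound : ∀ x, ‖K x‖ ≤ C * ‖x‖ ^ p) :
    IsTemperateKernel K μ := by
  set d := Module.finrank ℝ E
  set n := ⌈p⌉₊ + (d + 1) with hn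
  have weight_measurable : AEStronglyMeasurable (fun x : E ↦ ((1 + ‖x‖) ^ n)⁻¹) μ :=
    ((continuous_one_add_norm_pow n).inv₀
      fun x ↦ (one_add_norm_pow_pos n x).ne').aestronglyMeasurable
  have near : IntegrableOn (fun x ↦ ((1 + ‖x‖) ^ n)⁻¹ * K x) (Metric.ball 0 1) μ := by
    have hball : IntegrableOn K (Metric.ball 0 1) μ :=
      integrableOn_ball_of_norm_le_rpow (α := -p) Module.finrank_pos (by linarith)
        (.of_forall fun x ↦ by simpa using bound x) hK
    refine hball.bdd_mul (c := 1) weight_measurable.restrict (.of_forall fun x ↦ ?_)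
    rw [Real.norm_of_nonneg (by positivity)]
    exact inv_le_one_of_one_le₀ (one_le_pow₀ (by linarith [norm_nonneg x]))
  have far : IntegrableOn (fun x ↦ ((1 + ‖x‖) ^ n)⁻¹ * K x) (Metric.ball 0 1)ᶜ μ := by
    have decay : Integrable (fun x : E ↦ |C| * (1 + ‖x‖) ^ (-((d + 1 : ℕ) : ℝ))) μ :=
      (integrable_one_add_norm (by push_cast; linarith)).const_mul _
    refine decay.integrableOn.mono' (weight_measurable.mul hK).restrict <|
      (ae_restrict_iff' measurableSet_ball.compl).2 <| .of_forall fun x hx ↦ ?_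
    have one_le : 1 ≤ ‖x‖ := by simpa using hx
    have growth : ‖x‖ ^ p ≤ (1 + ‖x‖) ^ ⌈p⌉₊ := by
      calc ‖x‖ ^ p ≤ ‖x‖ ^ (⌈p⌉₊ : ℝ) := by gcongr; exact Nat.le_ceil p
        _ ≤ (1 + ‖x‖) ^ ⌈p⌉₊ := by rw [Real.rpow_natCast]; gcongr; linarith
    calc ‖((1 + ‖x‖) ^ n)⁻¹ * K x‖
        = ((1 + ‖x‖) ^ n)⁻¹ * ‖K x‖ := by rw [norm_mul, Real.norm_of_nonneg (by positivity)]
      _ ≤ ((1 + ‖x‖) ^ n)⁻¹ * (|C| * (1 + ‖x‖) ^ ⌈p⌉₊) := by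
        gcongr
        exact (bound x).trans (by gcongr; exact le_abs_self C)
      _ = |C| * (1 + ‖x‖) ^ (-((d + 1 : ℕ) : ℝ)) := by
        have := norm_nonneg x
        rw [Real.rpow_neg (by positivity), Real.rpow_natCast, hn, pow_add]
        field_simp
  exact ⟨n, integrableOn_univ.1 (Set.union_compl_self (Metric.ball (0 : E) 1) ▸ near.union far)⟩

end PowerSingularity

section IntegrationByParts

variable {E : Type*} [NormedAddCommGroup E] [NormedSpace ℝ E] [FiniteDimensional ℝ E]
  [MeasurableSpace E] [BorelSpace E] {μ : Measure E} [μ.IsAddHaarMeasure]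

lemma integrable_mul_of_hasTemperateGrowth {φ : E → ℝ} (hφ : φ.HasTemperateGrowth)
    (f : 𝓢(E, ℝ)) : Integrable (fun x ↦ φ x * f x) μ := by
  simpa only [smulLeftCLM_apply hφ, smul_eq_mul] using (smulLeftCLM ℝ φ f).integrable (μ := μ)

lemma integral_mul_fderiv_eq_neg_of_hasTemperateGrowth {φ : E → ℝ} (hφ : φ.HasTemperateGrowth)
    (f : 𝓢(E, ℝ)) (m : E) :
    ∫ x, φ x * fderiv ℝ f x m ∂μ = -∫ x, fderiv ℝ φ x m * f x ∂μ :=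
  integral_mul_fderiv_eq_neg_fderiv_mul_of_integrable
    (integrable_mul_of_hasTemperateGrowth (hasTemperateGrowth_fderiv_apply hφ m) f)
    (integrable_mul_of_hasTemperateGrowth hφ (∂_{m} f))
    (integrable_mul_of_hasTemperateGrowth hφ f)
    (fun _ _ ↦ (hφ.1.differentiable (by simp)).differentiableAt)
    (fun _ _ ↦ f.differentiableAt)

lemma IsTemperateKernel.integral_mul_convolution {K : E → ℝ} (hK : IsTemperateKernel K μ)
    (ψ f : 𝓢(E, ℝ)) :
    ∫ v, ψ v * (K ⋆[lsmul ℝ ℝ, μ] f) v ∂μ =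
      ∫ z : E × E, ψ z.1 * (K (z.1 - z.2) * f z.2) ∂μ.prod μ := by
  rw [integral_prod _ (hK.integrable_prod_mul_sub_mul ψ f)]
  simp only [convolution_lsmul_swap, smul_eq_mul, integral_const_mul]

end IntegrationByParts

section CollisionFlux

variable {E ι : Type*} [NormedAddCommGroup E] [NormedSpace ℝ E] [MeasurableSpace E]
  [BorelSpace E] [FiniteDimensional ℝ E] [Fintype ι] {μ : Measure E}

/-- One component `v ↦ ∫ ∑ⱼ aⱼ(v - v*) (f(v*) ∂ⱼg(v) - f(v) ∂ⱼg(v*)) dv*` of the bilinear collision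
flux with kernels `aⱼ` and derivatives along the vectors `eⱼ`, as a Schwartz function. -/
def collisionFlux (μ : Measure E) (a : ι → E → ℝ) (e : ι → E) (f g : 𝓢(E, ℝ)) : 𝓢(E, ℝ) :=
  ∑ j, (smulLeftCLM ℝ (a j ⋆[lsmul ℝ ℝ, μ] f) (∂_{e j} g) -
    smulLeftCLM ℝ (a j ⋆[lsmul ℝ ℝ, μ] (∂_{e j} g : 𝓢(E, ℝ))) f)

variable {a : ι → E → ℝ} {e : ι → E}

lemma collisionFlux_apply (ha : ∀ j, IsTemperateKernel (a j) μ) (f g : 𝓢(E, ℝ)) (v : E) :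
    collisionFlux μ a e f g v = ∑ j, ((a j ⋆[lsmul ℝ ℝ, μ] f) v * fderiv ℝ g v (e j) -
      (a j ⋆[lsmul ℝ ℝ, μ] (∂_{e j} g : 𝓢(E, ℝ))) v * f v) := by
  simp only [collisionFlux, sum_apply, sub_apply, smul_eq_mul,
    lineDerivOp_apply_eq_fderiv,
    smulLeftCLM_apply_apply ((ha _).hasTemperateGrowth_convolution _)]

variable [μ.IsAddHaarMeasure]

lemma collisionFlux_eq_integral (ha : ∀ j, IsTemperateKernel (a j) μ) (f g : 𝓢(E, ℝ)) (v : E) :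
    collisionFlux μ a e f g v =
      ∫ u, ∑ j, a j (v - u) * (f u * fderiv ℝ g v (e j) - f v * fderiv ℝ g u (e j)) ∂μ := by
  have integrable (j : ι) (h : 𝓢(E, ℝ)) : Integrable (fun u ↦ a j (v - u) * h u) μ := by
    simpa using ((ha j).convolutionExists h v).integrable_swap
  have integrable_gain (j : ι) :
      Integrable (fun u ↦ a j (v - u) * (f u * fderiv ℝ g v (e j))) μ := by
    simpa only [mul_assoc] using (integrable j f).mul_const (fderiv ℝ g v (e j))
  have integrable_loss (j : ι) :
      Integrable (fun u ↦ a j (v - u) * (f v * fderiv ℝ g u (e j))) μ := by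
    simpa only [mul_left_comm, lineDerivOp_apply_eq_fderiv] using
      (integrable j (∂_{e j} g)).const_mul (f v)
  calc collisionFlux μ a e f g v
      = ∑ j, (∫ u, a j (v - u) * (f u * fderiv ℝ g v (e j)) ∂μ -
          ∫ u, a j (v - u) * (f v * fderiv ℝ g u (e j)) ∂μ) := by
        simp only [collisionFlux_apply ha, convolution_lsmul_swap, smul_eq_mul,
          lineDerivOp_apply_eq_fderiv, ← integral_mul_const, mul_assoc, mul_comm (f v)]
    _ = ∫ u, ∑ j, a j (v - u) * (f u * fderiv ℝ g v (e j) - f v * fderiv ℝ g u (e j)) ∂μ := by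
        simp only [mul_sub]
        rw [integral_finsetSum]
        · exact Finset.sum_congr rfl fun j _ ↦
            (integral_sub (integrable_gain j) (integrable_loss j)).symm
        · exact fun j _ ↦ (integrable_gain j).sub (integrable_loss j)

lemma integral_mul_collisionFlux (ha : ∀ j, IsTemperateKernel (a j) μ) {η : E → ℝ}
    (hη : η.HasTemperateGrowth) (f g : 𝓢(E, ℝ)) :
    ∫ v, η v * collisionFlux μ a e f g v ∂μ =
      ∑ j, ∫ z : E × E, η z.1 * a j (z.1 - z.2) *
        (f z.2 * fderiv ℝ g z.1 (e j) - f z.1 * fderiv ℝ g z.2 (e j)) ∂μ.prod μ := by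
  have integrable (j : ι) (h k : 𝓢(E, ℝ)) :
      Integrable (fun v ↦ smulLeftCLM ℝ η h v * (a j ⋆[lsmul ℝ ℝ, μ] k) v) μ := by
    simpa only [mul_comm] using integrable_mul_of_hasTemperateGrowth
      ((ha j).hasTemperateGrowth_convolution k) (smulLeftCLM ℝ η h)
  calc ∫ v, η v * collisionFlux μ a e f g v ∂μ
      = ∫ v, ∑ j, (smulLeftCLM ℝ η (∂_{e j} g) v * (a j ⋆[lsmul ℝ ℝ, μ] f) v -
          smulLeftCLM ℝ η f v * (a j ⋆[lsmul ℝ ℝ, μ] (∂_{e j} g : 𝓢(E, ℝ))) v) ∂μ := by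
        simp only [collisionFlux_apply ha, smulLeftCLM_apply_apply hη, smul_eq_mul,
          Finset.mul_sum]
        congr! 3 with v j
        rw [lineDerivOp_apply_eq_fderiv]
        ring
    _ = ∑ j, (∫ z : E × E, smulLeftCLM ℝ η (∂_{e j} g) z.1 * (a j (z.1 - z.2) * f z.2) ∂μ.prod μ -
          ∫ z : E × E, smulLeftCLM ℝ η f z.1 *
            (a j (z.1 - z.2) * (∂_{e j} g : 𝓢(E, ℝ)) z.2) ∂μ.prod μ) := by
        rw [integral_finsetSum]
        · simp only [integral_sub (integrable _ _ _) (integrable _ _ _),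
            (ha _).integral_mul_convolution]
        · exact fun j _ ↦ (integrable j _ _).sub (integrable j _ _)
    _ = _ := by
        refine Finset.sum_congr rfl fun j _ ↦ ?_
        rw [← integral_sub ((ha j).integrable_prod_mul_sub_mul _ _)
          ((ha j).integrable_prod_mul_sub_mul _ _)]
        congr 1 with z
        simp only [smulLeftCLM_apply_apply hη, smul_eq_mul, lineDerivOp_apply_eq_fderiv]
        ring

lemma integral_mul_fderiv_collisionFlux (ha : ∀ j, IsTemperateKernel (a j) μ) {φ : E → ℝ}
    (hφ : φ.HasTemperateGrowth) (f g : 𝓢(E, ℝ)) (m : E) :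
    ∫ v, φ v * fderiv ℝ (collisionFlux μ a e f g) v m ∂μ =
      -∑ j, ∫ z : E × E, fderiv ℝ φ z.1 m * a j (z.1 - z.2) *
        (f z.2 * fderiv ℝ g z.1 (e j) - f z.1 * fderiv ℝ g z.2 (e j)) ∂μ.prod μ := by
  rw [integral_mul_fderiv_eq_neg_of_hasTemperateGrowth hφ,
    integral_mul_collisionFlux ha (hasTemperateGrowth_fderiv_apply hφ m)]

end CollisionFlux

section GaussianSchwartz

open Polynomial

lemma abs_pow_mul_exp_neg_sq_div_two_le (n : ℕ) (x : ℝ) :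
    |x| ^ n * exp (-(x ^ 2 / 2)) ≤ n.factorial * exp (1 / 2) := by
  have pow_le : |x| ^ n ≤ n.factorial * exp |x| := by
    have := pow_div_factorial_le_exp |x| (abs_nonneg x) n
    rwa [div_le_iff₀' (by positivity)] at this
  have complete_square : |x| + -(x ^ 2 / 2) ≤ 1 / 2 := by
    nlinarith [sq_nonneg (|x| - 1), sq_abs x]
  calc |x| ^ n * exp (-(x ^ 2 / 2))
      ≤ n.factorial * exp |x| * exp (-(x ^ 2 / 2)) := by gcongr
    _ = n.factorial * exp (|x| + -(x ^ 2 / 2)) := by rw [exp_add, mul_assoc]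
    _ ≤ n.factorial * exp (1 / 2) := by gcongr

lemma exists_abs_aeval_mul_exp_neg_sq_div_two_le {R : Type*} [CommSemiring R] [Algebra R ℝ]
    (p : R[X]) : ∃ C, ∀ x : ℝ, |aeval x p * exp (-(x ^ 2 / 2))| ≤ C := by
  induction p using Polynomial.induction_on' with
  | add p q hp hq =>
    obtain ⟨C, hC⟩ := hp
    obtain ⟨D, hD⟩ := hq
    refine ⟨C + D, fun x ↦ ?_⟩
    rw [map_add, add_mul]
    exact (abs_add_le _ _).trans (add_le_add (hC x) (hD x))
  | monomial n a =>
    refine ⟨|algebraMap R ℝ a| * (n.factorial * exp (1 / 2)), fun x ↦ ?_⟩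
    rw [aeval_monomial, mul_assoc, abs_mul, abs_mul, abs_pow, abs_exp]
    exact mul_le_mul_of_nonneg_left (abs_pow_mul_exp_neg_sq_div_two_le n x) (abs_nonneg _)

/-- The Gaussian `exp (-x² / 2)` on the real line as a Schwartz function. -/
def realGaussian : 𝓢(ℝ, ℝ) where
  toFun x := exp (-(x ^ 2 / 2))
  smooth' := by fun_prop
  decay' k n := by
    obtain ⟨C, hC⟩ := exists_abs_aeval_mul_exp_neg_sq_div_two_le (X ^ k * hermite n)
    refine ⟨C, fun x ↦ le_of_eq_of_le ?_ (hC x)⟩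
    rw [norm_iteratedFDeriv_eq_norm_iteratedDeriv, iteratedDeriv_eq_iterate,
      deriv_gaussian_eq_hermite_mul_gaussian]
    simp [abs_mul, mul_assoc]

lemma exists_norm_le_one_add_norm_one_add_norm_sq_rpow (H : Type*) [SeminormedAddCommGroup H] :
    ∃ (k : ℕ) (C : ℝ), ∀ x : H, ‖x‖ ≤ C * (1 + ‖(1 + ‖x‖ ^ 2) ^ (1 / 2 : ℝ)‖) ^ k := by
  refine ⟨1, 1, fun x ↦ ?_⟩
  have norm_le_sqrt : ‖x‖ ≤ √(1 + ‖x‖ ^ 2) := le_sqrt_of_sq_le (by linarith)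
  rw [← sqrt_eq_rpow, norm_of_nonneg (sqrt_nonneg _)]
  linarith

variable (H : Type*) [NormedAddCommGroup H] [InnerProductSpace ℝ H]

/-- The Gaussian `exp (-‖x‖² / 2)` on a real inner product space as a Schwartz function; it is
`exp (1 / 2)` times the real Gaussian evaluated at the smooth function `√(1 + ‖x‖²)`. -/
def gaussian : 𝓢(H, ℝ) :=
  exp (1 / 2) • compCLM ℝ (hasTemperateGrowth_one_add_norm_sq_rpow H (1 / 2))
    (exists_norm_le_one_add_norm_one_add_norm_sq_rpow H) realGaussian

variable {H}

lemma gaussian_apply (x : H) : gaussian H x = exp (-(‖x‖ ^ 2 / 2)) := by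
  have sq_rpow_half : ((1 + ‖x‖ ^ 2) ^ (1 / 2 : ℝ)) ^ 2 = 1 + ‖x‖ ^ 2 := by
    rw [← sqrt_eq_rpow, sq_sqrt (by positivity)]
  change exp (1 / 2) * exp (-(((1 + ‖x‖ ^ 2) ^ (1 / 2 : ℝ)) ^ 2 / 2)) = _
  rw [sq_rpow_half, ← exp_add]
  congr 1
  ring

end GaussianSchwartz

section HermiteFunction

open Polynomial

lemma hasTemperateGrowth_aeval {R : Type*} [CommSemiring R] [Algebra R ℝ] (p : R[X]) :
    (fun x : ℝ ↦ aeval x p).HasTemperateGrowth := by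
  induction p using Polynomial.induction_on' with
  | add p q hp hq =>
    simp only [map_add]
    exact hp.add hq
  | monomial n a =>
    simp only [aeval_monomial]
    fun_prop

lemma derivative_hermite (n : ℕ) : derivative (hermite n) = n * hermite (n - 1) := by
  induction n with
  | zero => simp
  | succ n ih =>
    rcases n with - | n
    · simp
    · rw [hermite_succ (n + 1), derivative_sub, derivative_mul, ih]
      simp only [Nat.add_sub_cancel, derivative_X, derivative_mul, derivative_natCast,
        hermite_succ n]
      push_cast
      ring

/-- The unnormalised probabilists' Hermite function `x ↦ Heₙ(x) exp (-x² / 2)`. -/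
def hermiteFunction (n : ℕ) (x : ℝ) : ℝ := aeval x (hermite n) * exp (-(x ^ 2 / 2))

lemma hasDerivAt_hermiteFunction (n : ℕ) (x : ℝ) :
    HasDerivAt (hermiteFunction n) (-hermiteFunction (n + 1) x) x := by
  have gauss : HasDerivAt (fun y : ℝ ↦ exp (-(y ^ 2 / 2))) (exp (-(x ^ 2 / 2)) * -x) x := by
    simpa using (((hasDerivAt_pow 2 x).div_const 2).neg).exp
  refine (((hermite n).hasDerivAt_aeval x).mul gauss).congr_deriv ?_
  simp only [hermiteFunction, hermite_succ, map_sub, map_mul, aeval_X]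
  ring

lemma iteratedDeriv_exp_neg_sq_div_two (n : ℕ) (x : ℝ) :
    iteratedDeriv n (fun y ↦ exp (-(y ^ 2 / 2))) x = (-1) ^ n * hermiteFunction n x := by
  rw [iteratedDeriv_eq_iterate, deriv_gaussian_eq_hermite_mul_gaussian, hermiteFunction, mul_assoc]

lemma fderiv_prod_apply_single {𝕜 ι : Type*} [NontriviallyNormedField 𝕜] [Fintype ι]
    [DecidableEq ι] {φ ψ : ι → 𝕜 → 𝕜} {v : ι → 𝕜} {s : ι} {c : 𝕜}
    (hφ : ∀ i, DifferentiableAt 𝕜 (φ i) (v i)) (hs : deriv (φ s) (v s) = c * ψ s (v s))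
    (hne : ∀ i ≠ s, φ i (v i) = ψ i (v i)) :
    fderiv 𝕜 (fun w : ι → 𝕜 ↦ ∏ i, φ i (w i)) v (Pi.single s 1) = c * ∏ i, ψ i (v i) := by
  have coordinate (i : ι) : HasFDerivAt (fun w : ι → 𝕜 ↦ φ i (w i))
      (deriv (φ i) (v i) • ContinuousLinearMap.proj i) v :=
    (hφ i).hasDerivAt.comp_hasFDerivAt v (proj (R := 𝕜) (φ := fun _ ↦ 𝕜) i).hasFDerivAt
  have others : ∏ i ∈ Finset.univ.erase s, φ i (v i) = ∏ i ∈ Finset.univ.erase s, ψ i (v i) :=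
    Finset.prod_congr rfl fun i hi ↦ hne i (Finset.ne_of_mem_erase hi)
  rw [(HasFDerivAt.finsetProd fun i _ ↦ coordinate i).fderiv, sum_apply,
    Finset.sum_eq_single s (by simp +contextual) (by simp), others,
    ← Finset.mul_prod_erase _ (fun i ↦ ψ i (v i)) (Finset.mem_univ s)]
  simp only [smul_apply, proj_apply, Pi.single_eq_same, smul_eq_mul, hs]
  ring

end HermiteFunction

section Maxwellian

open Polynomial

lemma Mxw_pos (v : V3) : 0 < Mxw v := by
  unfold Mxw
  positivity

lemma Mxw_eq_prod (v : V3) : Mxw v = (2 * π) ^ (-(3 : ℝ) / 2) * ∏ i, exp (-(v i ^ 2 / 2)) := by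
  rw [Mxw, ← exp_sum, Finset.sum_neg_distrib, ← Finset.sum_div, neg_div 2 (∑ i, v i ^ 2)]

lemma neg_one_pow_degIdx (α : Fin 3 → ℕ) : (-1 : ℝ) ^ degIdx α = ∏ i, (-1) ^ α i := by
  rw [degIdx, Fin.prod_univ_three, pow_add, pow_add]

lemma Herm_mul_Mxw (α : Fin 3 → ℕ) (v : V3) :
    Herm α v * Mxw v = (2 * π) ^ (-(3 : ℝ) / 2) * ∏ i, hermiteFunction (α i) (v i) := by
  have iterated : iteratedDeriv (α 0) (fun x1 ↦ iteratedDeriv (α 1) (fun x2 ↦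
      iteratedDeriv (α 2) (fun x3 ↦ Mxw ![x1, x2, x3]) (v 2)) (v 1)) (v 0) =
      (2 * π) ^ (-(3 : ℝ) / 2) * ∏ i, ((-1) ^ α i * hermiteFunction (α i) (v i)) := by
    simp [Mxw_eq_prod, Fin.prod_univ_three, iteratedDeriv_const_mul_field,
      iteratedDeriv_mul_const_field, iteratedDeriv_exp_neg_sq_div_two]
  have sign : (-1 : ℝ) ^ degIdx α * (-1) ^ degIdx α = 1 := by simp [← mul_pow]
  rw [Herm, mul_right_comm, div_mul_cancel₀ _ (Mxw_pos v).ne', iterated, Finset.prod_mul_distrib,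
    ← neg_one_pow_degIdx, mul_left_comm, ← mul_assoc (_ ^ degIdx α), sign, one_mul]

lemma Herm_eq_prod (α : Fin 3 → ℕ) (v : V3) : Herm α v = ∏ i, aeval (v i) (hermite (α i)) := by
  refine mul_right_cancel₀ (Mxw_pos v).ne' ?_
  rw [Herm_mul_Mxw, Mxw_eq_prod]
  simp only [hermiteFunction, Finset.prod_mul_distrib]
  ring

lemma hasTemperateGrowth_Herm (α : Fin 3 → ℕ) : (Herm α).HasTemperateGrowth := by
  have factor (i : Fin 3) : (fun v : V3 ↦ aeval (v i) (hermite (α i))).HasTemperateGrowth :=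
    (hasTemperateGrowth_aeval _).comp
      (ContinuousLinearMap.proj (R := ℝ) (φ := fun _ : Fin 3 ↦ ℝ) i).hasTemperateGrowth
  rw [funext (Herm_eq_prod α)]
  simp only [Fin.prod_univ_three]
  exact ((factor 0).mul (factor 1)).mul (factor 2)

lemma pd_Herm (α : Fin 3 → ℕ) (s : Fin 3) (v : V3) :
    pd s (Herm α) v = α s * Herm (α - Pi.single s 1) v := by
  rw [pd, funext (Herm_eq_prod α), Herm_eq_prod,
    fderiv_prod_apply_single (φ := fun i x ↦ aeval x (hermite (α i)))
      (ψ := fun i x ↦ aeval x (hermite ((α - Pi.single s 1 : Fin 3 → ℕ) i))) (c := (α s : ℝ))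
      (fun i ↦ (hermite (α i)).differentiableAt_aeval) (by simp [derivative_hermite])
      fun i hi ↦ by simp [hi]]

lemma pd_Herm_mul_Mxw (κ : Fin 3 → ℕ) (t : Fin 3) (v : V3) :
    pd t (fun u ↦ Herm κ u * Mxw u) v = -(Herm (κ + Pi.single t 1) v * Mxw v) := by
  have smul_prod : (fun u ↦ Herm κ u * Mxw u) =
      (2 * π : ℝ) ^ (-(3 : ℝ) / 2) • fun u ↦ ∏ i, hermiteFunction (κ i) (u i) :=
    funext (Herm_mul_Mxw κ)
  rw [pd, smul_prod, fderiv_const_smul_field, Herm_mul_Mxw, Pi.smul_apply, smul_apply,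
    fderiv_prod_apply_single (φ := fun i ↦ hermiteFunction (κ i))
      (ψ := fun i ↦ hermiteFunction ((κ + Pi.single t 1 : Fin 3 → ℕ) i)) (c := -1)
      (fun i ↦ (hasDerivAt_hermiteFunction (κ i) (v i)).differentiableAt)
      (by simp [(hasDerivAt_hermiteFunction _ _).deriv]) fun i hi ↦ by simp [hi],
    neg_one_mul, smul_neg, smul_eq_mul]

/-- The Maxwellian `M` as a Schwartz function. -/
def maxwellian : 𝓢(V3, ℝ) :=
  (2 * π) ^ (-(3 : ℝ) / 2) • compCLMOfContinuousLinearEquiv ℝ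
    (EuclideanSpace.equiv (Fin 3) ℝ).symm (gaussian (EuclideanSpace ℝ (Fin 3)))

lemma maxwellian_apply (v : V3) : maxwellian v = Mxw v := by
  simp [maxwellian, gaussian_apply, Mxw, EuclideanSpace.real_norm_sq_eq, neg_div]

/-- The product `H^κ M` as a Schwartz function. -/
def hermiteMaxwellian (κ : Fin 3 → ℕ) : 𝓢(V3, ℝ) := smulLeftCLM ℝ (Herm κ) maxwellian

lemma coe_hermiteMaxwellian (κ : Fin 3 → ℕ) :
    ⇑(hermiteMaxwellian κ) = fun v ↦ Herm κ v * Mxw v := by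
  ext v
  rw [hermiteMaxwellian, smulLeftCLM_apply_apply (hasTemperateGrowth_Herm κ), maxwellian_apply,
    smul_eq_mul]

end Maxwellian

section LandauKernel

lemma exists_norm_equiv_rpow_le {𝕜 E F : Type*} [NontriviallyNormedField 𝕜]
    [NormedAddCommGroup E] [NormedSpace 𝕜 E] [NormedAddCommGroup F] [NormedSpace 𝕜 F]
    (e : E ≃L[𝕜] F) (p : ℝ) : ∃ D : ℝ, ∀ x, ‖e x‖ ^ p ≤ D * ‖x‖ ^ p := by
  obtain hp | hp := le_or_gt 0 p
  · refine ⟨‖(e : E →L[𝕜] F)‖ ^ p, fun x ↦ ?_⟩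
    rw [← mul_rpow (norm_nonneg _) (norm_nonneg _)]
    exact rpow_le_rpow (norm_nonneg _) ((e : E →L[𝕜] F).le_opNorm x) hp
  · refine ⟨‖(e.symm : F →L[𝕜] E)‖ ^ (-p), fun x ↦ ?_⟩
    obtain rfl | hx := eq_or_ne x 0
    · simp [zero_rpow hp.ne]
    have norm_pos : 0 < ‖x‖ := norm_pos_iff.2 hx
    have norm_le : ‖x‖ ≤ ‖(e.symm : F →L[𝕜] E)‖ * ‖e x‖ := by
      simpa using (e.symm : F →L[𝕜] E).le_opNorm (e x)
    have symm_pos : 0 < ‖(e.symm : F →L[𝕜] E)‖ :=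
      pos_of_mul_pos_left (norm_pos.trans_le norm_le) (norm_nonneg _)
    calc ‖e x‖ ^ p
        = ‖(e.symm : F →L[𝕜] E)‖ ^ (-p) * (‖(e.symm : F →L[𝕜] E)‖ * ‖e x‖) ^ p := by
          rw [mul_rpow (norm_nonneg _) (norm_nonneg _), ← mul_assoc, ← rpow_add symm_pos,
            neg_add_cancel, rpow_zero, one_mul]
      _ ≤ ‖(e.symm : F →L[𝕜] E)‖ ^ (-p) * ‖x‖ ^ p := by
          gcongr ?_ * ?_
          exact rpow_le_rpow_of_nonpos norm_pos norm_le hp.le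

lemma nrm_eq_norm_equiv (v : V3) : nrm v = ‖(EuclideanSpace.equiv (Fin 3) ℝ).symm v‖ := by
  simp [nrm, EuclideanSpace.norm_eq]

lemma nrm_nonneg (v : V3) : 0 ≤ nrm v := sqrt_nonneg _

lemma nrm_eq_zero {v : V3} : nrm v = 0 ↔ v = 0 := by
  rw [nrm_eq_norm_equiv, norm_eq_zero, EmbeddingLike.map_eq_zero_iff]

lemma abs_le_nrm (v : V3) (i : Fin 3) : |v i| ≤ nrm v := by
  rw [nrm_eq_norm_equiv]
  exact PiLp.norm_apply_le ((EuclideanSpace.equiv (Fin 3) ℝ).symm v) i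

lemma abs_Aker_le (Λ γ : ℝ) (v : V3) (i j : Fin 3) :
    |Aker Λ γ v i j| ≤ |Λ| * 2 * nrm v ^ (γ + 2) := by
  have abs_mul_div_le : |v i * v j / nrm v ^ 2| ≤ 1 := by
    rw [abs_div, abs_mul, abs_sq, sq]
    have := nrm_nonneg v
    exact div_le_one_of_le₀ (by gcongr <;> apply abs_le_nrm) (by positivity)
  have abs_delta_le : |if i = j then (1 : ℝ) else 0| ≤ 1 := by split_ifs <;> simp
  have abs_projection_le := (abs_sub _ _).trans (add_le_add abs_delta_le abs_mul_div_le)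
  rw [Aker, abs_mul, abs_mul, abs_rpow_of_nonneg (nrm_nonneg v), abs_of_nonneg (nrm_nonneg v),
    mul_right_comm]
  gcongr
  · exact rpow_nonneg (nrm_nonneg v) _
  · linarith

lemma measurable_Aker (Λ γ : ℝ) (i j : Fin 3) : Measurable fun v ↦ Aker Λ γ v i j := by
  unfold Aker nrm
  fun_prop

lemma isTemperateKernel_Aker (Λ : ℝ) {γ : ℝ} (hγ : -5 < γ) (i j : Fin 3) :
    IsTemperateKernel (fun v ↦ Aker Λ γ v i j) volume := by
  obtain ⟨D, hD⟩ := exists_norm_equiv_rpow_le (EuclideanSpace.equiv (Fin 3) ℝ).symm (γ + 2)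
  refine IsTemperateKernel.of_norm_le_rpow (C := |Λ| * 2 * D) (p := γ + 2)
    (measurable_Aker Λ γ i j).aestronglyMeasurable (by simp; linarith) fun v ↦ ?_
  calc ‖Aker Λ γ v i j‖
      ≤ |Λ| * 2 * nrm v ^ (γ + 2) := abs_Aker_le Λ γ v i j
    _ ≤ |Λ| * 2 * (D * ‖v‖ ^ (γ + 2)) := by
        rw [nrm_eq_norm_equiv]
        gcongr
        exact hD v
    _ = |Λ| * 2 * D * ‖v‖ ^ (γ + 2) := by ring

lemma Aker_eq_of_ne_zero (Λ γ : ℝ) {v : V3} (hv : v ≠ 0) (i j : Fin 3) :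
    Aker Λ γ v i j =
      Λ * (nrm v ^ γ * ((if i = j then (1 : ℝ) else 0) * nrm v ^ (2 : ℕ) - v i * v j)) := by
  have nrm_pos : 0 < nrm v := (nrm_nonneg v).lt_of_ne' (nrm_eq_zero.not.2 hv)
  rw [Aker, rpow_add nrm_pos, rpow_two]
  field_simp

-- The antisymmetric factor is needed on the diagonal: for `γ = -2` the two kernels differ at `0`.
lemma Aker_sub_mul_sub (Λ γ : ℝ) (f g : V3 → ℝ) (v u : V3) (i j : Fin 3) :
    Aker Λ γ (v - u) i j * (f u * g v - f v * g u) =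
      Λ * (nrm (v - u) ^ γ * ((if i = j then (1 : ℝ) else 0) * nrm (v - u) ^ (2 : ℕ) -
        (v - u) i * (v - u) j) * (f u * g v - f v * g u)) := by
  obtain rfl | hne := eq_or_ne v u
  · simp
  · rw [Aker_eq_of_ne_zero Λ γ (sub_ne_zero.2 hne), mul_assoc]

lemma multiFact_eq_prod (α : Fin 3 → ℕ) : multiFact α = ∏ i, (α i).factorial := by
  rw [multiFact, Fin.prod_univ_three]

lemma multiFact_eq_mul_multiFact_sub_single {α : Fin 3 → ℕ} {s : Fin 3} (hs : α s ≠ 0) :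
    multiFact α = α s * multiFact (α - Pi.single s 1) := by
  have others : ∏ i ∈ Finset.univ.erase s, (α i).factorial =
      ∏ i ∈ Finset.univ.erase s, ((α - Pi.single s 1 : Fin 3 → ℕ) i).factorial :=
    Finset.prod_congr rfl fun i hi ↦ by simp [Finset.ne_of_mem_erase hi]
  rw [multiFact_eq_prod, multiFact_eq_prod, ← Finset.mul_prod_erase _ _ (Finset.mem_univ s),
    ← Finset.mul_prod_erase _ _ (Finset.mem_univ s), others, Pi.sub_apply, Pi.single_eq_same,
    ← mul_assoc, Nat.mul_factorial_pred hs]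

end LandauKernel

lemma integral_mul_div3_collision (Λ : ℝ) {γ : ℝ} (hγ : -5 < γ) {φ : V3 → ℝ}
    (hφ : φ.HasTemperateGrowth) (f g : 𝓢(V3, ℝ)) :
    ∫ v, φ v * div3 (fun w i ↦ ∫ u, ∑ j, Aker Λ γ (w - u) i j *
      (f u * pd j g w - f w * pd j g u)) v =
      -∑ i, ∑ j, ∫ z : V3 × V3, pd i φ z.1 * Aker Λ γ (z.1 - z.2) i j *
        (f z.2 * pd j g z.1 - f z.1 * pd j g z.2) := by
  let flux (i : Fin 3) : 𝓢(V3, ℝ) :=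
    collisionFlux volume (fun j v ↦ Aker Λ γ v i j) (fun j ↦ Pi.single j 1) f g
  have flux_eq (i : Fin 3) : (fun w ↦ ∫ u, ∑ j, Aker Λ γ (w - u) i j *
      (f u * pd j g w - f w * pd j g u)) = flux i :=
    funext fun w ↦ (collisionFlux_eq_integral (isTemperateKernel_Aker Λ hγ i) f g w).symm
  have integrable (i : Fin 3) : Integrable fun v ↦ φ v * pd i (flux i) v := by
    simpa only [mul_comm, pd, lineDerivOp_apply_eq_fderiv] using
      integrable_mul_of_hasTemperateGrowth hφ (∂_{(Pi.single i 1 : V3)} (flux i))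
  simp only [div3, flux_eq, Finset.mul_sum]
  rw [integral_finsetSum _ fun i _ ↦ integrable i, ← Finset.sum_neg_distrib]
  exact Finset.sum_congr rfl fun i _ ↦
    integral_mul_fderiv_collisionFlux (isTemperateKernel_Aker Λ hγ i) hφ f g (Pi.single i 1)

lemma pd_Herm_mul_Aker_mul (Λ γ : ℝ) (α lam kap : Fin 3 → ℕ) (s t : Fin 3) (v u : V3) :
    pd s (Herm α) v * Aker Λ γ (v - u) s t *
      (Herm lam u * Mxw u * pd t (fun w ↦ Herm kap w * Mxw w) v -
        Herm lam v * Mxw v * pd t (fun w ↦ Herm kap w * Mxw w) u) =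
      -(α s * Λ) * (nrm (v - u) ^ γ *
        ((if s = t then (1 : ℝ) else 0) * nrm (v - u) ^ (2 : ℕ) - (v - u) s * (v - u) t) *
        Herm (α - Pi.single s 1) v * Mxw v * Mxw u *
        (Herm lam u * Herm (kap + Pi.single t 1) v -
          Herm lam v * Herm (kap + Pi.single t 1) u)) := by
  rw [pd_Herm, pd_Herm_mul_Mxw, pd_Herm_mul_Mxw]
  linear_combination -(α s * Herm (α - Pi.single s 1) v) *
    Aker_sub_mul_sub Λ γ (fun w ↦ Herm lam w * Mxw w)
      (fun w ↦ Herm (kap + Pi.single t 1) w * Mxw w) v u s t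

/-- the coefficient A_α^{λ,κ} rewritten after integration by parts,
for |α| ≥ 1 (terms with α_s = 0 are omitted). -/
theorem coeA_after_integration_by_parts (Λ γ : ℝ) (hΛ : 0 < Λ) (hγ : γ > -5)
    (α lam kap : Fin 3 → ℕ) (hα : 1 ≤ degIdx α) :
    coeA Λ γ α lam kap =
      ∑ s : Fin 3, ∑ t : Fin 3,
        if 1 ≤ α s then
          (Λ / (multiFact (α - Pi.single s 1) : ℝ)) *
            ∫ z : V3 × V3,
              nrm (z.1 - z.2) ^ γ *
                ((if s = t then (1 : ℝ) else 0) * nrm (z.1 - z.2) ^ (2 : ℕ) -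
                  (z.1 - z.2) s * (z.1 - z.2) t) *
                Herm (α - Pi.single s 1) z.1 * Mxw z.1 * Mxw z.2 *
                (Herm lam z.2 * Herm (kap + Pi.single t 1) z.1 -
                  Herm lam z.1 * Herm (kap + Pi.single t 1) z.2)
        else 0 := by
  have weak_form := integral_mul_div3_collision Λ hγ (hasTemperateGrowth_Herm α)
    (hermiteMaxwellian lam) (hermiteMaxwellian kap)
  simp only [coe_hermiteMaxwellian, pd_Herm_mul_Aker_mul, integral_const_mul] at weak_form
  rw [coeA, weak_form]
  simp only [← Finset.sum_neg_distrib, Finset.mul_sum]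
  refine Finset.sum_congr rfl fun s _ ↦ Finset.sum_congr rfl fun t _ ↦ ?_
  by_cases hs : 1 ≤ α s
  · have factorial_ne_zero : (multiFact (α - Pi.single s 1) : ℝ) ≠ 0 := by
      simp [multiFact, Nat.factorial_ne_zero]
    have index_ne_zero : (α s : ℝ) ≠ 0 := by positivity
    rw [if_pos hs, multiFact_eq_mul_multiFact_sub_single (Nat.one_le_iff_ne_zero.1 hs),
      Nat.cast_mul]
    field_simp
  · simp [Nat.lt_one_iff.1 (not_le.1 hs)]
end
end
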